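/- arXiv:1303.7184 — 5 statements merged into one kernel-verified Lean document; each statement's English description precedes it below -/
import Mathlib

section
/- Let μ = e^{−V}dx and ν = e^{−W}dx be probability measures on ℝ with V and W continuously differentiable, and let T : ℝ → ℝ be the increasing transport map pushing μ onto ν, defined by ∫_{−∞}^{x} e^{−V(t)} dt = ∫_{−∞}^{T(x)} e^{−W(t)} dt. Assume there exist p > 1 and ε > 0 such that x·W′(x) ≥ (−1+ε)/(p−1) for all x ∈ ℝ, and there exists δ > 0 such that ∫ |x|^{p(p+δ)/δ} dν < ∞ and ∫ |V′|^{p+δ} dμ < ∞. Then T is continuously differentiable and ∫ (T′)^p dμ < ∞. -/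
open MeasureTheory Real Set

lemma aux_integrable (V : ℝ → ℝ) (hV : Continuous V) (μ : Measure ℝ)
    (hμ : μ = volume.withDensity (fun x => ENNReal.ofReal (Real.exp (-V x))))
    (f : ℝ → ℝ) : Integrable f μ ↔ Integrable (fun x => f x * Real.exp (-V x)) := by
  rw [hμ, integrable_withDensity_iff]
  · simp [ENNReal.toReal_ofReal (Real.exp_pos _).le]
  · fun_prop
  · simp

lemma aux_strictDeriv (W : ℝ → ℝ) (hW : Continuous W)
    (hi : Integrable (fun x => Real.exp (-W x))) (y : ℝ) :
    HasStrictDerivAt (fun y => ∫ t in Iic y, Real.exp (-W t)) (Real.exp (-W y)) y := by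
  have hc : Continuous (fun x => Real.exp (-W x)) := by fun_prop
  have h1 : HasStrictDerivAt (fun y => (∫ t in (0:ℝ)..y, Real.exp (-W t)) +
      ∫ t in Iic 0, Real.exp (-W t)) (Real.exp (-W y)) y :=
    (hc.integral_hasStrictDerivAt 0 y).add_const _
  convert h1 using 2 with z
  rw [← intervalIntegral.integral_Iic_sub_Iic hi.integrableOn hi.integrableOn]
  ring

lemma aux_deriv (V W T : ℝ → ℝ) (hV : Continuous V) (hW : Continuous W)
    (hVi : Integrable (fun x => Real.exp (-V x)))
    (hWi : Integrable (fun x => Real.exp (-W x)))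
    (hT : ∀ x : ℝ, ∫ t in Iic x, Real.exp (-V t) = ∫ t in Iic (T x), Real.exp (-W t))
    (x : ℝ) : HasDerivAt T (Real.exp (W (T x) - V x)) x := by
  set G : ℝ → ℝ := fun y => ∫ t in Iic y, Real.exp (-W t) with hG
  set F : ℝ → ℝ := fun y => ∫ t in Iic y, Real.exp (-V t) with hF
  have hGd : ∀ y, HasStrictDerivAt G (Real.exp (-W y)) y := aux_strictDeriv W hW hWi
  have hFd : ∀ y, HasStrictDerivAt F (Real.exp (-V y)) y := aux_strictDeriv V hV hVi
  have hFG : ∀ y, F y = G (T y) := hT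
  have hmono : StrictMono G := strictMono_of_deriv_pos (fun y => by
    rw [(hGd y).hasDerivAt.deriv]; exact Real.exp_pos _)
  have hne : Real.exp (-W (T x)) ≠ 0 := (Real.exp_pos _).ne'
  set g := (hGd (T x)).localInverse G _ _ hne with hg
  have hgd : HasStrictDerivAt g (Real.exp (-W (T x)))⁻¹ (G (T x)) :=
    (hGd (T x)).to_localInverse hne
  have hev : ∀ᶠ y in nhds (G (T x)), G (g y) = y :=
    HasStrictFDerivAt.eventually_right_inverse
      ((hGd (T x)).hasStrictFDerivAt_equiv hne)
  rw [← hFG] at hgd hev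
  have hc := hgd.hasDerivAt.comp x (hFd x).hasDerivAt
  have he : T =ᶠ[nhds x] g ∘ F := by
    filter_upwards [(hFd x).hasDerivAt.continuousAt.eventually hev] with y hy
    apply hmono.injective
    rw [← hFG]; exact hy.symm
  have := hc.congr_of_eventuallyEq he
  refine this.congr_deriv ?_
  rw [← Real.exp_neg, ← Real.exp_add]; congr 1; ring

lemma aux_young (p ε X Y : ℝ) (hp : 1 < p) (hε : 0 < ε) (hX : 0 ≤ X) (hY : 0 ≤ Y) :
    p * X ^ (p - 1) * Y ≤ ε / 2 * X ^ p + p * (2 * p / ε) ^ (p - 1) * Y ^ p := by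
  have hpw : ∀ Z : ℝ, 0 ≤ Z → Z ^ p = Z ^ (p - 1) * Z := by
    intro Z hZ
    rcases hZ.eq_or_lt with rfl | h
    · rw [Real.zero_rpow (by linarith)]; simp
    · rw [Real.rpow_sub_one h.ne']; field_simp
  have hXp : 0 ≤ X ^ (p - 1) := Real.rpow_nonneg hX _
  have hYp : 0 ≤ Y ^ (p - 1) := Real.rpow_nonneg hY _
  have h0 : 0 ≤ 2 * p / ε := by positivity
  rcases le_total (p * Y) (ε / 2 * X) with h | h
  · have h1 : p * X ^ (p - 1) * Y ≤ ε / 2 * X ^ p := by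
      rw [hpw X hX]; nlinarith [mul_le_mul_of_nonneg_left h hXp]
    have : 0 ≤ p * (2 * p / ε) ^ (p - 1) * Y ^ p := by positivity
    linarith
  · have h1 : X ≤ 2 * p / ε * Y := by
      rw [div_mul_eq_mul_div, le_div_iff₀ hε]; linarith
    have h2 : X ^ (p - 1) ≤ (2 * p / ε) ^ (p - 1) * Y ^ (p - 1) := by
      rw [← Real.mul_rpow h0 hY]
      exact Real.rpow_le_rpow hX h1 (by linarith)
    have h3 : 0 ≤ ε / 2 * X ^ p := by positivity
    have h4 : p * X ^ (p - 1) * Y ≤ p * (2 * p / ε) ^ (p - 1) * Y ^ p := by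
      rw [hpw Y hY]
      calc p * X ^ (p - 1) * Y ≤ p * ((2 * p / ε) ^ (p - 1) * Y ^ (p - 1)) * Y := by gcongr
        _ = _ := by ring
    linarith

lemma aux_alg (p ε a φ φ' E D t w v : ℝ) (hp : 1 < p) (ha : 0 ≤ a) (hφ : 0 ≤ φ) (hφ1 : φ ≤ 1)
    (hφ' : |φ'| ≤ 1) (hE : 0 ≤ E) (hD : 0 ≤ D) (hw : (-1 + ε) / (p - 1) ≤ t * w) :
    ε * (a * φ * D * E) - p * (a * E) * (|t| * (|v| + 1)) ≤
      (φ' * p * a * t + a * φ * D) * E + a * φ * t * (E * ((p - 1) * (w * D - v) - v)) := by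
  have h1 : -1 + ε ≤ (p - 1) * (t * w) := by
    rw [div_le_iff₀ (by linarith)] at hw; linarith
  have h2 : 0 ≤ a * φ * D * E := by positivity
  have h3 := mul_le_mul_of_nonneg_left h1 h2
  have h4 : t * (φ * v - φ') ≤ |t| * (|v| + 1) := by
    refine (le_abs_self _).trans ?_
    rw [abs_mul]
    gcongr
    refine (abs_sub _ _).trans ?_
    rw [abs_mul, abs_of_nonneg hφ]
    have := abs_nonneg v
    nlinarith
  have h5 := mul_le_mul_of_nonneg_left h4 (show 0 ≤ p * (a * E) by positivity)
  nlinarith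

lemma aux_mom (p δ t v : ℝ) (hp : 1 < p) (hδ : 0 < δ) :
    (|t| * (|v| + 1)) ^ p ≤
      |t| ^ (p * (p + δ) / δ) + 2 ^ (p + δ) * (|v| ^ (p + δ) + 1) := by
  have hv := abs_nonneg v
  have ht := abs_nonneg t
  have hb : (|v| + 1) ^ (p + δ) ≤ 2 ^ (p + δ) * (|v| ^ (p + δ) + 1) := by
    have hm : |v| + 1 ≤ 2 * max |v| 1 := by
      have := le_max_left |v| 1
      have := le_max_right |v| 1
      linarith
    have hmax : (max |v| 1) ^ (p + δ) ≤ |v| ^ (p + δ) + 1 := by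
      have h0 : 0 ≤ |v| ^ (p + δ) := by positivity
      rcases max_cases |v| 1 with ⟨h, _⟩ | ⟨h, _⟩ <;> rw [h]
      · linarith
      · rw [Real.one_rpow]; linarith
    calc (|v| + 1) ^ (p + δ) ≤ (2 * max |v| 1) ^ (p + δ) :=
          Real.rpow_le_rpow (by positivity) hm (by linarith)
      _ = 2 ^ (p + δ) * (max |v| 1) ^ (p + δ) := Real.mul_rpow (by norm_num) (by positivity)
      _ ≤ _ := by gcongr
  have ha : (|t| * (|v| + 1)) ^ p ≤ |t| ^ (p * (p + δ) / δ) + (|v| + 1) ^ (p + δ) := by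
    rw [Real.mul_rpow ht (by positivity)]
    have hx : |t| ^ (p * (p + δ) / δ) = (|t| ^ p) ^ ((p + δ) / δ) := by
      rw [← Real.rpow_mul ht]; congr 1; ring
    have hy : (|v| + 1) ^ (p + δ) = ((|v| + 1) ^ p) ^ ((p + δ) / p) := by
      rw [← Real.rpow_mul (by positivity)]; congr 1; field_simp
    rw [hx, hy]
    have hc : ((p + δ) / δ).HolderConjugate ((p + δ) / p) := by
      rw [Real.holderConjugate_iff]
      constructor
      · rw [lt_div_iff₀ hδ]; linarith
      · field_simp; ring
    have hyo := Real.young_inequality_of_nonneg (show 0 ≤ |t| ^ p by positivity)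
      (show 0 ≤ (|v| + 1) ^ p by positivity) hc
    refine hyo.trans (add_le_add ?_ ?_)
    · exact div_le_self (by positivity) hc.lt.le
    · exact div_le_self (by positivity) hc.symm.lt.le
  linarith

lemma aux_push (V W T : ℝ → ℝ) (hV : Continuous V) (hW : Continuous W)
    (hTd : ∀ x, HasDerivAt T (Real.exp (W (T x) - V x)) x)
    (f : ℝ → ℝ) (hf : Continuous f) (hf0 : ∀ x, 0 ≤ f x)
    (hi : Integrable (fun x => f x * Real.exp (-W x))) :
    Integrable (fun x => f (T x) * Real.exp (-V x)) := by
  have hTc : Continuous T := continuous_iff_continuousAt.2 fun x => (hTd x).continuousAt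
  have hTm : Monotone T := monotone_of_hasDerivAt_nonneg hTd (fun x => (Real.exp_pos _).le)
  have hc : Continuous (fun x => f (T x) * Real.exp (-V x)) := by fun_prop
  refine integrable_of_intervalIntegral_norm_bounded (∫ x, f x * Real.exp (-W x))
    (l := Filter.atTop) (a := fun n : ℕ => -(n : ℝ)) (b := fun n : ℕ => (n : ℝ)) ?_ ?_ ?_ ?_
  · intro n
    exact (hc.integrableOn_Icc).mono_set Ioc_subset_Icc_self
  · exact Filter.tendsto_neg_atTop_atBot.comp tendsto_natCast_atTop_atTop
  · exact tendsto_natCast_atTop_atTop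
  · refine Filter.Eventually.of_forall fun n => ?_
    have hsub := intervalIntegral.integral_comp_mul_deriv (a := -(n : ℝ)) (b := (n : ℝ))
      (f := T) (f' := fun x => Real.exp (W (T x) - V x)) (g := fun x => f x * Real.exp (-W x))
      (fun x _ => hTd x) (by fun_prop) (by fun_prop)
    have heq : ∀ x, ‖f (T x) * Real.exp (-V x)‖ =
        ((fun x => f x * Real.exp (-W x)) ∘ T) x * Real.exp (W (T x) - V x) := by
      intro x
      rw [Real.norm_of_nonneg (mul_nonneg (hf0 _) (Real.exp_pos _).le)]
      simp only [Function.comp]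
      rw [mul_assoc, ← Real.exp_add]; congr 2; ring
    simp_rw [heq]
    rw [hsub, intervalIntegral.integral_of_le (hTm (by linarith [Nat.cast_nonneg (α := ℝ) n]))]
    exact setIntegral_le_integral hi
      (Filter.Eventually.of_forall fun x => mul_nonneg (hf0 _) (Real.exp_pos _).le)

/-- The main estimate with cut-off. -/
lemma aux_main (V W T : ℝ → ℝ) (hV : ContDiff ℝ 1 V) (hW : ContDiff ℝ 1 W)
    (hTd : ∀ x, HasDerivAt T (Real.exp (W (T x) - V x)) x)
    (p ε : ℝ) (hp : 1 < p) (hε : 0 < ε)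
    (hW' : ∀ x : ℝ, (-1 + ε) / (p - 1) ≤ x * deriv W x)
    (hY : Integrable (fun x => (|T x| * (|deriv V x| + 1)) ^ p * Real.exp (-V x)))
    (R : ℝ) (hR : 2 ≤ R) :
    ε / 2 * ∫ x in (-R)..R, ((1 - (x / R) ^ 2) * Real.exp (W (T x) - V x)) ^ p * Real.exp (-V x) ≤
      p * (2 * p / ε) ^ (p - 1) *
        ∫ x, (|T x| * (|deriv V x| + 1)) ^ p * Real.exp (-V x) := by
  have hTc : Continuous T := continuous_iff_continuousAt.2 fun x => (hTd x).continuousAt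
  have hVc := hV.continuous
  have hWc := hW.continuous
  have hV'c : Continuous (deriv V) := hV.continuous_deriv le_rfl
  have hW'c : Continuous (deriv W) := hW.continuous_deriv le_rfl
  have hVd : ∀ x, HasDerivAt V (deriv V x) x :=
    fun x => ((hV.differentiable (by norm_num)) x).hasDerivAt
  have hWd : ∀ x, HasDerivAt W (deriv W x) x :=
    fun x => ((hW.differentiable (by norm_num)) x).hasDerivAt
  set D : ℝ → ℝ := fun x => Real.exp (W (T x) - V x) with hD
  set E : ℝ → ℝ := fun x => Real.exp ((p - 1) * (W (T x) - V x) - V x) with hE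
  set φ : ℝ → ℝ := fun x => 1 - (x / R) ^ 2 with hφ
  set φ' : ℝ → ℝ := fun x => - (2 * x / R ^ 2) with hφ'
  set Y : ℝ → ℝ := fun x => |T x| * (|deriv V x| + 1) with hYdef
  set C : ℝ := p * (2 * p / ε) ^ (p - 1) with hC
  have hR0 : 0 < R := by linarith
  have hDc : Continuous D := by fun_prop
  have hEc : Continuous E := by fun_prop
  have hφc : Continuous φ := by fun_prop
  have hφ'c : Continuous φ' := by fun_prop
  have hYc : Continuous Y := by fun_prop
  have hφd : ∀ x, HasDerivAt φ (φ' x) x := by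
    intro x
    have := (((hasDerivAt_id x).div_const R).pow 2).const_sub 1
    refine this.congr_deriv ?_
    simp only [hφ', id]
    norm_num
    field_simp
  have hEd : ∀ x, HasDerivAt E (E x * ((p - 1) * (deriv W (T x) * D x - deriv V x) - deriv V x)) x := by
    intro x
    exact (((((hWd (T x)).comp x (hTd x)).sub (hVd x)).const_mul (p - 1)).sub (hVd x)).exp
  set h' : ℝ → ℝ := fun x => (φ' x * p * φ x ^ (p - 1) * T x + φ x ^ p * D x) * E x +
    φ x ^ p * T x * (E x * ((p - 1) * (deriv W (T x) * D x - deriv V x) - deriv V x)) with hh'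
  have hd : ∀ x, HasDerivAt (fun x => φ x ^ p * T x * E x) (h' x) x := by
    intro x
    exact (((hφd x).rpow_const (Or.inr hp.le)).mul (hTd x)).mul (hEd x)
  have hp1c : Continuous (fun x => φ x ^ (p - 1)) :=
    hφc.rpow_const (fun x => Or.inr (by linarith))
  have hpc : Continuous (fun x => φ x ^ p) :=
    hφc.rpow_const (fun x => Or.inr (by linarith))
  have hYpc : Continuous (fun x => Y x ^ p) :=
    hYc.rpow_const (fun x => Or.inr (by linarith))
  have hXpc : Continuous (fun x => (φ x * D x) ^ p) :=
    (hφc.mul hDc).rpow_const (fun x => Or.inr (by linarith))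
  have hh'c : Continuous h' := by fun_prop
  have hftc := intervalIntegral.integral_eq_sub_of_hasDerivAt (a := -R) (b := R)
    (fun x _ => hd x) (hh'c.intervalIntegrable _ _)
  have hb1 : φ R = 0 := by simp [hφ, hR0.ne']
  have hb2 : φ (-R) = 0 := by simp [hφ, hR0.ne', neg_div]
  simp only [hb1, hb2, Real.zero_rpow (show p ≠ 0 by linarith), zero_mul, sub_zero] at hftc
  have hpt : ∀ x ∈ Icc (-R) R, ε / 2 * ((φ x * D x) ^ p * Real.exp (-V x)) -
      C * (Y x ^ p * Real.exp (-V x)) ≤ h' x := by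
    intro x hx
    have hD0 : 0 < D x := Real.exp_pos _
    have hE0 : 0 < E x := Real.exp_pos _
    have hY0 : 0 ≤ Y x := by positivity
    have hsq : (x / R) ^ 2 ≤ 1 := by
      rw [div_pow, div_le_one (by positivity)]
      exact sq_le_sq' hx.1 hx.2
    have hφ0 : 0 ≤ φ x := by simp only [hφ]; linarith
    have hφ1 : φ x ≤ 1 := by simp only [hφ]; linarith [sq_nonneg (x / R)]
    have hφ'1 : |φ' x| ≤ 1 := by
      simp only [hφ']
      rw [abs_neg, abs_div, abs_mul, abs_of_pos (show (0:ℝ) < 2 by norm_num),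
        abs_of_pos (show 0 < R ^ 2 by positivity), div_le_one (by positivity)]
      have := abs_le.2 hx
      nlinarith
    have hpw : φ x ^ p = φ x ^ (p - 1) * φ x := by
      rcases hφ0.eq_or_lt with h | h
      · rw [← h, Real.zero_rpow (by linarith)]; simp
      · rw [Real.rpow_sub_one h.ne']; field_simp
    have hEeq : E x = D x ^ (p - 1) * Real.exp (-V x) := by
      simp only [hE, hD]
      rw [← Real.exp_mul, ← Real.exp_add]; congr 1; ring
    have hDpw : D x ^ p = D x ^ (p - 1) * D x := by
      rw [Real.rpow_sub_one hD0.ne']; field_simp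
    have halg := aux_alg p ε (φ x ^ (p - 1)) (φ x) (φ' x) (E x) (D x) (T x) (deriv W (T x))
      (deriv V x) hp (Real.rpow_nonneg hφ0 _) hφ0 hφ1 hφ'1 hE0.le hD0.le (hW' _)
    have hyo := aux_young p ε (φ x * D x) (Y x) hp hε (by positivity) hY0
    have hyo2 := mul_le_mul_of_nonneg_right hyo (Real.exp_pos (-V x)).le
    rw [Real.mul_rpow hφ0 hD0.le, Real.mul_rpow hφ0 hD0.le] at hyo2
    rw [Real.mul_rpow hφ0 hD0.le]
    simp only [hh']
    rw [hpw]
    refine le_trans ?_ halg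
    rw [hpw, hDpw] at hyo2
    rw [hDpw, hEeq]
    simp only [← hC] at hyo2
    change _ ≤ _ - _ * Y x
    linarith
  have hI1 : IntervalIntegrable (fun x => (φ x * D x) ^ p * Real.exp (-V x)) volume (-R) R :=
    Continuous.intervalIntegrable (by fun_prop) _ _
  have hI2 : IntervalIntegrable (fun x => Y x ^ p * Real.exp (-V x)) volume (-R) R :=
    Continuous.intervalIntegrable (by fun_prop) _ _
  have hle := intervalIntegral.integral_mono_on (by linarith)
    ((hI1.const_mul (ε / 2)).sub (hI2.const_mul C)) (hh'c.intervalIntegrable (-R) R) hpt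
  rw [hftc, intervalIntegral.integral_sub (hI1.const_mul (ε / 2)) (hI2.const_mul C),
    intervalIntegral.integral_const_mul, intervalIntegral.integral_const_mul] at hle
  have hfin : ∫ x in (-R)..R, Y x ^ p * Real.exp (-V x) ≤ ∫ x, Y x ^ p * Real.exp (-V x) := by
    rw [intervalIntegral.integral_of_le (by linarith)]
    exact setIntegral_le_integral hY (Filter.Eventually.of_forall fun x => by
      have : 0 ≤ Y x := by positivity
      positivity)
  have hC0 : 0 ≤ C := by positivity
  have := mul_le_mul_of_nonneg_left hfin hC0
  linarith

/-- Let `μ = e^{-V} dx` and `ν = e^{-W} dx` be probability measures on ℝ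
with `V`, `W` continuously differentiable, and let `T` be the increasing transport map
pushing `μ` onto `ν`, i.e. `∫_{-∞}^x e^{-V} dt = ∫_{-∞}^{T x} e^{-W} dt` for all `x`.
If `x * W'(x) ≥ (-1+ε)/(p-1)` for some `p > 1`, `ε > 0`, and
`∫ |x|^{p(p+δ)/δ} dν < ∞`, `∫ |V'|^{p+δ} dμ < ∞` for some `δ > 0`,
then `T` is continuously differentiable and `∫ (T')^p dμ < ∞`. -/
theorem stmt0
    (V W : ℝ → ℝ) (hV : ContDiff ℝ 1 V) (hW : ContDiff ℝ 1 W)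
    (μ ν : Measure ℝ)
    (hμ : μ = volume.withDensity (fun x => ENNReal.ofReal (Real.exp (-V x))))
    (hν : ν = volume.withDensity (fun x => ENNReal.ofReal (Real.exp (-W x))))
    (hμP : IsProbabilityMeasure μ) (hνP : IsProbabilityMeasure ν)
    (T : ℝ → ℝ) (hTmono : Monotone T)
    (hT : ∀ x : ℝ, ∫ t in Iic x, Real.exp (-V t) = ∫ t in Iic (T x), Real.exp (-W t))
    (p ε : ℝ) (hp : 1 < p) (hε : 0 < ε)
    (hW' : ∀ x : ℝ, (-1 + ε) / (p - 1) ≤ x * deriv W x)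
    (δ : ℝ) (hδ : 0 < δ)
    (hνmom : Integrable (fun x => |x| ^ (p * (p + δ) / δ)) ν)
    (hV' : Integrable (fun x => |deriv V x| ^ (p + δ)) μ) :
    ContDiff ℝ 1 T ∧ Integrable (fun x => (deriv T x) ^ p) μ := by
  have hVc := hV.continuous
  have hWc := hW.continuous
  have hV'c : Continuous (deriv V) := hV.continuous_deriv le_rfl
  have hVi : Integrable (fun x => Real.exp (-V x)) := by
    simpa using (aux_integrable V hVc μ hμ (fun _ => 1)).1 (integrable_const 1)
  have hWi : Integrable (fun x => Real.exp (-W x)) := by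
    simpa using (aux_integrable W hWc ν hν (fun _ => 1)).1 (integrable_const 1)
  have hTd := aux_deriv V W T hVc hWc hVi hWi hT
  have hTc : Continuous T := continuous_iff_continuousAt.2 fun x => (hTd x).continuousAt
  have hdT : deriv T = fun x => Real.exp (W (T x) - V x) := funext fun x => (hTd x).deriv
  refine ⟨?_, ?_⟩
  · rw [contDiff_one_iff_deriv]
    refine ⟨fun x => (hTd x).differentiableAt, ?_⟩
    rw [hdT]; fun_prop
  rw [aux_integrable W hWc ν hν] at hνmom
  rw [aux_integrable V hVc μ hμ] at hV' ⊢
  have hm : 0 ≤ p * (p + δ) / δ := by positivity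
  have hTm := aux_push V W T hVc hWc hTd (fun x => |x| ^ (p * (p + δ) / δ))
    (continuous_abs.rpow_const (fun x => Or.inr hm)) (fun x => by positivity) hνmom
  have hYpc : Continuous (fun x => (|T x| * (|deriv V x| + 1)) ^ p) :=
    Continuous.rpow_const (by fun_prop) (fun x => Or.inr (by linarith))
  have hY : Integrable (fun x => (|T x| * (|deriv V x| + 1)) ^ p * Real.exp (-V x)) := by
    refine (hTm.add ((hV'.add hVi).const_mul (2 ^ (p + δ)))).mono'
      (Continuous.aestronglyMeasurable (by fun_prop)) (Filter.Eventually.of_forall fun x => ?_)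
    rw [Real.norm_of_nonneg (by positivity)]
    have := mul_le_mul_of_nonneg_right (aux_mom p δ (T x) (deriv V x) hp hδ)
      (Real.exp_pos (-V x)).le
    simp only [Pi.add_apply]
    linarith
  have hmain := aux_main V W T hV hW hTd p ε hp hε hW' hY
  set K := p * (2 * p / ε) ^ (p - 1) *
        ∫ x, (|T x| * (|deriv V x| + 1)) ^ p * Real.exp (-V x) with hK
  have hDpc : Continuous (fun x => Real.exp (W (T x) - V x) ^ p) :=
    Continuous.rpow_const (by fun_prop) (fun x => Or.inr (by linarith))
  rw [hdT]
  have hfc : Continuous (fun x => Real.exp (W (T x) - V x) ^ p * Real.exp (-V x)) := by fun_prop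
  refine integrable_of_intervalIntegral_norm_bounded (2 ^ p * (2 / ε * K))
    (l := Filter.atTop) (a := fun n : ℕ => -(n : ℝ)) (b := fun n : ℕ => (n : ℝ)) ?_ ?_ ?_ ?_
  · intro n
    exact (hfc.integrableOn_Icc).mono_set Ioc_subset_Icc_self
  · exact Filter.tendsto_neg_atTop_atBot.comp tendsto_natCast_atTop_atTop
  · exact tendsto_natCast_atTop_atTop
  · filter_upwards [Filter.eventually_ge_atTop 1] with n hn
    have hn1 : (1 : ℝ) ≤ n := by exact_mod_cast hn
    have hm2 := hmain (2 * n) (by linarith)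
    set g : ℝ → ℝ := fun x => ((1 - (x / (2 * n)) ^ 2) * Real.exp (W (T x) - V x)) ^ p *
      Real.exp (-V x) with hg
    have hgpc : Continuous (fun x => ((1 - (x / (2 * (n : ℝ))) ^ 2) *
        Real.exp (W (T x) - V x)) ^ p) :=
      Continuous.rpow_const (by fun_prop) (fun x => Or.inr (by linarith))
    have hgc : Continuous g := by fun_prop
    have hm3 : ∫ x in (-(2 * (n : ℝ)))..(2 * n), g x ≤ 2 / ε * K := by
      have := mul_le_mul_of_nonneg_left hm2 (show 0 ≤ 2 / ε by positivity)
      rw [← mul_assoc, show 2 / ε * (ε / 2) = 1 by field_simp, one_mul] at this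
      exact this
    have hm4 : ∫ x in (-(n : ℝ))..n, g x ≤ ∫ x in (-(2 * (n : ℝ)))..(2 * n), g x := by
      rw [intervalIntegral.integral_of_le (by linarith),
        intervalIntegral.integral_of_le (by linarith)]
      refine setIntegral_mono_set ((hgc.integrableOn_Icc).mono_set Ioc_subset_Icc_self) ?_
        (Ioc_subset_Ioc (by linarith) (by linarith)).eventuallyLE
      filter_upwards [ae_restrict_mem measurableSet_Ioc] with x hx
      have : (x / (2 * n)) ^ 2 ≤ 1 := by
        rw [div_pow, div_le_one (by positivity)]
        exact sq_le_sq' hx.1.le hx.2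
      have h0 : 0 ≤ 1 - (x / (2 * n)) ^ 2 := by linarith
      simp only [hg, Pi.zero_apply]
      positivity
    have hm5 : ∫ x in (-(n : ℝ))..n, ‖Real.exp (W (T x) - V x) ^ p * Real.exp (-V x)‖ ≤
        ∫ x in (-(n : ℝ))..n, 2 ^ p * g x := by
      refine intervalIntegral.integral_mono_on (by linarith)
        (hfc.norm.intervalIntegrable _ _)
        ((continuous_const.mul hgc).intervalIntegrable _ _) ?_
      intro x hx
      have : (x / (2 * n)) ^ 2 ≤ 1 / 4 := by
        rw [div_pow, div_le_iff₀ (by positivity)]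
        have := sq_le_sq' hx.1 hx.2
        nlinarith
      have h0 : 1 / 2 ≤ 1 - (x / (2 * n)) ^ 2 := by linarith
      have hD0 := Real.exp_pos (W (T x) - V x)
      rw [Real.norm_of_nonneg (by positivity)]
      simp only [hg]
      rw [← mul_assoc, ← Real.mul_rpow (by norm_num) (mul_nonneg (by linarith) hD0.le)]
      gcongr
      nlinarith
    rw [intervalIntegral.integral_const_mul] at hm5
    refine hm5.trans ?_
    gcongr
    exact hm4.trans hm3
end

section
/- Let V, W : ℝ → ℝ be twice continuously differentiable with e^{−V}dx and e^{−W}dx probability measures, and let T : ℝ → ℝ be the increasing transport map pushing e^{−V}dx onto e^{−W}dx. If there are constants C > 0 and K > 0 with V″(x) ≤ C and W″(x) ≥ K for all x ∈ ℝ, then T is Lipschitz and T′(x) ≤ √(C/K) for every x ∈ ℝ. -/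
open MeasureTheory Real Set

lemma aux_int (V : ℝ → ℝ) (hV : Continuous V)
    (h : IsProbabilityMeasure (volume.withDensity (fun x => ENNReal.ofReal (Real.exp (-V x))))) :
    Integrable (fun x => Real.exp (-V x)) := by
  have hc : Continuous (fun x => Real.exp (-V x)) := by fun_prop
  refine ⟨hc.aestronglyMeasurable, ?_⟩
  rw [hasFiniteIntegral_iff_ofReal (Filter.Eventually.of_forall fun x => (Real.exp_pos _).le)]
  have h1 := h.measure_univ
  rw [withDensity_apply _ MeasurableSet.univ, Measure.restrict_univ] at h1
  rw [h1]; exact ENNReal.one_lt_top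

lemma aux_deriv_s1 (f : ℝ → ℝ) (hf : Continuous f) (hi : Integrable f) (x : ℝ) :
    HasDerivAt (fun x => ∫ t in Iic x, f t) (f x) x := by
  have h : (fun x => ∫ t in Iic x, f t) = fun x => (∫ t in (0:ℝ)..x, f t) + ∫ t in Iic 0, f t := by
    funext y
    rw [← intervalIntegral.integral_Iic_sub_Iic hi.integrableOn hi.integrableOn]
    ring
  rw [h]
  exact (intervalIntegral.integral_hasDerivAt_right (hf.intervalIntegrable _ _)
    (hf.stronglyMeasurableAtFilter _ _) hf.continuousAt).add_const _

lemma aux_strictMono (f : ℝ → ℝ) (hf : Continuous f) (hp : ∀ x, 0 < f x) (hi : Integrable f) :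
    StrictMono (fun x => ∫ t in Iic x, f t) := by
  apply strictMono_of_deriv_pos
  intro x
  rw [(aux_deriv_s1 f hf hi x).deriv]; exact hp x

/-- A local lower bound on the mass near `x`. -/
lemma aux_mass (V : ℝ → ℝ) (hV : ContDiff ℝ 2 V) (C : ℝ) (hC : 0 < C)
    (hVC : ∀ x : ℝ, deriv (deriv V) x ≤ C) (hi : Integrable (fun x => Real.exp (-V x))) (x : ℝ) :
    2 * Real.exp (-C / 2) * Real.exp (-V x) ≤
      (∫ t in Iic (x + 1), Real.exp (-V t)) - ∫ t in Iic (x - 1), Real.exp (-V t) := by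
  have hc : Continuous (fun x => Real.exp (-V x)) := by
    have := hV.continuous
    fun_prop
  have hd : Differentiable ℝ V := hV.differentiable (by norm_num)
  have hd2 : Differentiable ℝ (deriv V) := by
    have : ContDiff ℝ 1 (deriv V) := by
      have h2 : ContDiff ℝ (1 + 1) V := by norm_num; exact hV
      exact (contDiff_succ_iff_deriv.1 h2).2.2
    exact this.differentiable (by norm_num)
  have hconv : ConvexOn ℝ univ (fun y => C * y ^ 2 / 2 - V y) := by
    have e1 : ∀ y, HasDerivAt (fun y => C * y ^ 2 / 2 - V y) (C * y - deriv V y) y := by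
      intro y
      have := ((((hasDerivAt_id y).pow 2).const_mul C).div_const 2).sub (hd y).hasDerivAt
      refine (this.congr_deriv ?_)
      simp; ring
    have e1' : deriv (fun y => C * y ^ 2 / 2 - V y) = fun y => C * y - deriv V y :=
      funext fun y => (e1 y).deriv
    have e2 : ∀ y, HasDerivAt (fun y => C * y - deriv V y) (C - deriv (deriv V) y) y := by
      intro y
      have := ((hasDerivAt_id y).const_mul C).sub (hd2 y).hasDerivAt
      refine (this.congr_deriv ?_)
      simp
    apply convexOn_univ_of_deriv2_nonneg
    · exact fun y => (e1 y).differentiableAt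
    · rw [e1']; exact fun y => (e2 y).differentiableAt
    · intro y
      rw [Function.iterate_succ, Function.iterate_one, Function.comp, e1', (e2 y).deriv]
      linarith [hVC y]
  have key : ∀ h : ℝ, V (x + h) + V (x - h) ≤ 2 * V x + C * h ^ 2 := by
    intro h
    have := hconv.2 (mem_univ (x + h)) (mem_univ (x - h)) 
      (by norm_num : (0:ℝ) ≤ 1/2) (by norm_num : (0:ℝ) ≤ 1/2) (by norm_num)
    simp only [smul_eq_mul] at this
    have e : (1/2 : ℝ) * (x + h) + 1/2 * (x - h) = x := by ring
    rw [e] at this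
    nlinarith
  have key2 : ∀ h : ℝ, h ∈ Icc (0:ℝ) 1 →
      2 * Real.exp (-C / 2) * Real.exp (-V x) ≤ Real.exp (-V (x + h)) + Real.exp (-V (x - h)) := by
    intro h hh
    have a1 : Real.exp (-C / 2) * Real.exp (-V x) ≤
        Real.exp (-V (x+h) / 2) * Real.exp (-V (x - h) / 2) := by
      rw [← Real.exp_add, ← Real.exp_add]
      apply Real.exp_le_exp.2
      have := key h
      have : C * h ^ 2 ≤ C := by
        have : h ^ 2 ≤ 1 := by nlinarith [hh.1, hh.2]
        nlinarith
      linarith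
    have b1 : Real.exp (-V (x + h)) = Real.exp (-V (x+h) / 2) ^ 2 := by
      rw [← Real.exp_nat_mul]; congr 1; push_cast; ring
    have b2 : Real.exp (-V (x - h)) = Real.exp (-V (x-h) / 2) ^ 2 := by
      rw [← Real.exp_nat_mul]; congr 1; push_cast; ring
    rw [b1, b2]
    nlinarith [sq_nonneg (Real.exp (-V (x+h) / 2) - Real.exp (-V (x-h) / 2))]
  have hG : ∀ h : ℝ, HasDerivAt (fun h => (∫ t in Iic (x + h), Real.exp (-V t)) -
      ∫ t in Iic (x - h), Real.exp (-V t)) (Real.exp (-V (x + h)) + Real.exp (-V (x - h))) h := by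
    intro h
    have h1 := (aux_deriv_s1 _ hc hi (x + h)).comp h ((hasDerivAt_id h).const_add x)
    have h2 := (aux_deriv_s1 _ hc hi (x - h)).comp h ((hasDerivAt_id h).const_sub x)
    exact (h1.sub h2).congr_deriv (by simp)
  have := (convex_Icc (0:ℝ) 1).mul_sub_le_image_sub_of_le_deriv
    (fun y _ => (hG y).continuousAt.continuousWithinAt)
    (fun y _ => (hG y).differentiableAt.differentiableWithinAt)
    (C := 2 * Real.exp (-C / 2) * Real.exp (-V x))
    (fun y hy => by rw [(hG y).deriv]; exact key2 y (interior_subset hy))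
    0 (by simp) 1 (by simp) zero_le_one
  simpa using this

lemma aux_tendsto (V : ℝ → ℝ) (hV : ContDiff ℝ 2 V) (C : ℝ) (hC : 0 < C)
    (hVC : ∀ x : ℝ, deriv (deriv V) x ≤ C) (hi : Integrable (fun x => Real.exp (-V x))) :
    Filter.Tendsto (fun x => Real.exp (-V x)) (Filter.cocompact ℝ) (nhds 0) := by
  have top : Filter.Tendsto (fun x => ∫ t in Iic x, Real.exp (-V t)) Filter.atTop
      (nhds (∫ t, Real.exp (-V t))) := by
    exact (aecover_Iic Filter.tendsto_id).integral_tendsto_of_countably_generated hi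
  have bot : Filter.Tendsto (fun x => ∫ t in Iic x, Real.exp (-V t)) Filter.atBot
      (nhds 0) := by
    have h1 : Filter.Tendsto (fun x => ∫ t in Ioi x, Real.exp (-V t)) Filter.atBot
        (nhds (∫ t, Real.exp (-V t))) :=
      (aecover_Ioi Filter.tendsto_id).integral_tendsto_of_countably_generated hi
    have h2 := h1.const_sub (∫ t, Real.exp (-V t))
    rw [sub_self] at h2
    refine h2.congr fun x => ?_
    have := intervalIntegral.integral_Iic_add_Ioi (b := x) hi.integrableOn hi.integrableOn
    linarith
  set c := 2 * Real.exp (-C / 2) with hcdef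
  have hc : 0 < c := by positivity
  have bd : ∀ x, Real.exp (-V x) ≤ c⁻¹ * ((∫ t in Iic (x + 1), Real.exp (-V t)) -
      ∫ t in Iic (x - 1), Real.exp (-V t)) := by
    intro x
    rw [le_inv_mul_iff₀ hc]
    exact aux_mass V hV C hC hVC hi x
  rw [cocompact_eq_atBot_atTop, Filter.tendsto_sup]
  constructor
  · refine squeeze_zero (fun x => (Real.exp_pos _).le) bd ?_
    have := ((bot.comp (Filter.tendsto_atBot_add_const_right Filter.atBot (1:ℝ) Filter.tendsto_id)).sub
      (bot.comp (Filter.tendsto_atBot_add_const_right Filter.atBot (-1:ℝ) Filter.tendsto_id))).const_mul c⁻¹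
    simpa [Function.comp_def, sub_eq_add_neg] using this
  · refine squeeze_zero (fun x => (Real.exp_pos _).le) bd ?_
    have := ((top.comp (Filter.tendsto_atTop_add_const_right Filter.atTop (1:ℝ) Filter.tendsto_id)).sub
      (top.comp (Filter.tendsto_atTop_add_const_right Filter.atTop (-1:ℝ) Filter.tendsto_id))).const_mul c⁻¹
    simpa [Function.comp_def, sub_eq_add_neg] using this

lemma aux_T (f g : ℝ → ℝ) (hf : Continuous f) (hg : Continuous g) (hfi : Integrable f)
    (hgi : Integrable g) (hgp : ∀ x, 0 < g x) (T : ℝ → ℝ)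
    (hT : ∀ x : ℝ, ∫ t in Iic x, f t = ∫ t in Iic (T x), g t) (x : ℝ) :
    HasDerivAt T (f x / g (T x)) x := by
  have hm := aux_strictMono g hg hgp hgi
  set H : ℝ → ℝ := fun x => ∫ t in Iic x, g t with hH
  set F : ℝ → ℝ := fun x => ∫ t in Iic x, f t with hF
  have hFd : ∀ x, HasDerivAt F (f x) x := aux_deriv_s1 f hf hfi
  have hHd : ∀ x, HasDerivAt H (g x) x := aux_deriv_s1 g hg hgi
  have hT' : ∀ y, F y = H (T y) := hT
  have hcont : ContinuousAt T x := by
    rw [ContinuousAt, tendsto_order]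
    constructor
    · intro a ha
      have h1 : H a < F x := by rw [hT']; exact hm ha
      filter_upwards [(hFd x).continuousAt.eventually (lt_mem_nhds h1)] with y hy
      rw [hT'] at hy; exact hm.lt_iff_lt.1 hy
    · intro a ha
      have h1 : F x < H a := by rw [hT']; exact hm ha
      filter_upwards [(hFd x).continuousAt.eventually (gt_mem_nhds h1)] with y hy
      rw [hT'] at hy; exact hm.lt_iff_lt.1 hy
  have hs : HasStrictDerivAt H (g (T x)) (T x) :=
    hasStrictDerivAt_of_hasDerivAt_of_continuousAt
      (Filter.Eventually.of_forall hHd) hg.continuousAt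
  have hne := (hgp (T x)).ne'
  have hl := (hs.to_localInverse hne).hasDerivAt
  have hli : ∀ᶠ z in nhds (T x), hs.localInverse H (g (T x)) (T x) hne (H z) = z :=
    HasStrictFDerivAt.eventually_left_inverse _
  rw [← hT'] at hl
  have hcomp := hl.comp x (hFd x)
  refine (hcomp.congr_of_eventuallyEq ?_).congr_deriv (by field_simp)
  filter_upwards [hcont.eventually hli] with y hy
  simp only [Function.comp]
  rw [hT', hy]

/-- Let `V, W : ℝ → ℝ` be twice continuously differentiable with
`e^{-V} dx`, `e^{-W} dx` probability measures, and let `T` be the increasing transport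
map pushing `e^{-V} dx` onto `e^{-W} dx`. If `V'' ≤ C` and `W'' ≥ K` for constants
`C, K > 0`, then `T` is Lipschitz with `T'(x) ≤ √(C/K)` for every `x`. -/
theorem stmt1
    (V W : ℝ → ℝ) (hV : ContDiff ℝ 2 V) (hW : ContDiff ℝ 2 W)
    (μ ν : Measure ℝ)
    (hμ : μ = volume.withDensity (fun x => ENNReal.ofReal (Real.exp (-V x))))
    (hν : ν = volume.withDensity (fun x => ENNReal.ofReal (Real.exp (-W x))))
    (hμP : IsProbabilityMeasure μ) (hνP : IsProbabilityMeasure ν)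
    (T : ℝ → ℝ) (hTmono : Monotone T)
    (hT : ∀ x : ℝ, ∫ t in Iic x, Real.exp (-V t) = ∫ t in Iic (T x), Real.exp (-W t))
    (C K : ℝ) (hC : 0 < C) (hK : 0 < K)
    (hVC : ∀ x : ℝ, deriv (deriv V) x ≤ C)
    (hWK : ∀ x : ℝ, K ≤ deriv (deriv W) x) :
    LipschitzWith (Real.toNNReal (Real.sqrt (C / K))) T ∧
    ∀ x : ℝ, deriv T x ≤ Real.sqrt (C / K) := by
  subst hμ hν
  have hfc : Continuous (fun x => Real.exp (-V x)) := by
    have := hV.continuous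
    fun_prop
  have hgc : Continuous (fun x => Real.exp (-W x)) := by
    have := hW.continuous
    fun_prop
  have hfi := aux_int V hV.continuous hμP
  have hgi := aux_int W hW.continuous hνP
  have hTd : ∀ x, HasDerivAt T (Real.exp (-V x) / Real.exp (-W (T x))) x :=
    aux_T _ _ hfc hgc hfi hgi (fun x => Real.exp_pos _) T hT
  have hTc : Continuous T := continuous_iff_continuousAt.2 fun x => (hTd x).continuousAt
  have d1 : ∀ U : ℝ → ℝ, ContDiff ℝ 2 U → ∀ x, HasDerivAt U (deriv U x) x := fun U hU x =>
    (hU.differentiable (by norm_num) x).hasDerivAt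
  have d2 : ∀ U : ℝ → ℝ, ContDiff ℝ 2 U → ∀ x, HasDerivAt (deriv U) (deriv (deriv U) x) x := by
    intro U hU x
    have h2 : ContDiff ℝ (1 + 1) U := by norm_num; exact hU
    exact ((contDiff_succ_iff_deriv.1 h2).2.2.differentiable (by norm_num) x).hasDerivAt
  set l := Real.sqrt (C / K) with hl
  have hl0 : 0 < l := Real.sqrt_pos.2 (div_pos hC hK)
  have hl2 : l ^ 2 * K = C := by
    rw [hl, Real.sq_sqrt (div_pos hC hK).le]; field_simp
  -- the comparison function
  set D : ℝ → ℝ := fun x => Real.exp (-V x) - l * Real.exp (-W (T x)) with hD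
  have hDc : Continuous D := hfc.sub (continuous_const.mul (hgc.comp hTc))
  have hDd : ∀ x, HasDerivAt D (Real.exp (-V x) * (l * deriv W (T x) - deriv V x)) x := by
    intro x
    have h1 := (d1 V hV x).neg.exp
    have h2 := (((d1 W hW (T x)).comp x (hTd x)).neg.exp).const_mul l
    refine (h1.sub h2).congr_deriv ?_
    simp only [Function.comp, Pi.neg_apply]
    have := (Real.exp_pos (-W (T x))).ne'
    field_simp
    ring
  have hDle : ∀ x, D x ≤ 0 := by
    by_contra! hcon
    obtain ⟨x1, hx1⟩ := hcon
    have ht := aux_tendsto V hV C hC hVC hfi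
    obtain ⟨x0, hx0⟩ := hDc.exists_forall_ge' x1 (by
      filter_upwards [ht.eventually (gt_mem_nhds hx1)] with y hy
      have := Real.exp_pos (-W (T y))
      have : 0 < l * Real.exp (-W (T y)) := by positivity
      have : D y = Real.exp (-V y) - l * Real.exp (-W (T y)) := rfl
      linarith)
    have hpos : 0 < D x0 := hx1.trans_le (hx0 x1)
    have hz : Real.exp (-V x0) * (l * deriv W (T x0) - deriv V x0) = 0 :=
      IsLocalMax.hasDerivAt_eq_zero (Filter.Eventually.of_forall hx0) (hDd x0)
    have hz' : l * deriv W (T x0) - deriv V x0 = 0 :=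
      (mul_eq_zero.1 hz).resolve_left (Real.exp_pos _).ne'
    have hphi : HasDerivAt (fun x => l * deriv W (T x) - deriv V x)
        (l * (deriv (deriv W) (T x0) * (Real.exp (-V x0) / Real.exp (-W (T x0)))) -
          deriv (deriv V) x0) x0 :=
      (((d2 W hW (T x0)).comp x0 (hTd x0)).const_mul l).sub (d2 V hV x0)
    have hTl : l < Real.exp (-V x0) / Real.exp (-W (T x0)) := by
      rw [lt_div_iff₀ (Real.exp_pos _)]
      have : D x0 = Real.exp (-V x0) - l * Real.exp (-W (T x0)) := rfl
      linarith
    set q := Real.exp (-V x0) / Real.exp (-W (T x0)) with hq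
    have hphip : 0 < l * (deriv (deriv W) (T x0) * q) - deriv (deriv V) x0 := by
      have a1 : K * l < deriv (deriv W) (T x0) * q := by
        calc K * l < K * q := by gcongr
          _ ≤ _ := by
            have := hWK (T x0)
            have : 0 < q := hl0.trans hTl
            gcongr
      have a2 := mul_lt_mul_of_pos_left a1 hl0
      nlinarith [hVC x0]
    have hev : ∀ᶠ y in nhdsWithin x0 (Ioi x0), 0 < l * deriv W (T y) - deriv V y := by
      have := (hasDerivAt_iff_tendsto_slope.1 hphi).eventually (lt_mem_nhds hphip)
      have := this.filter_mono (nhdsWithin_mono x0 (fun y (hy : x0 < y) => (ne_of_gt hy : y ∈ ({x0}ᶜ : Set ℝ))))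
      filter_upwards [this, self_mem_nhdsWithin] with y hy hy2
      rw [slope_def_field, hz', sub_zero] at hy
      exact (div_pos_iff_of_pos_right (sub_pos.2 hy2)).1 hy
    obtain ⟨u, hu, hu2⟩ := (mem_nhdsGT_iff_exists_Ioo_subset).1 hev
    have hu' : x0 < u := hu
    have hsm : StrictMonoOn D (Icc x0 ((x0 + u) / 2)) := by
      apply strictMonoOn_of_deriv_pos (convex_Icc _ _) hDc.continuousOn
      intro y hy
      rw [interior_Icc] at hy
      rw [(hDd y).deriv]
      have : y ∈ Ioo x0 u := ⟨hy.1, by linarith [hy.2]⟩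
      exact mul_pos (Real.exp_pos _) (hu2 this)
    have := hsm (left_mem_Icc.2 (by linarith)) (right_mem_Icc.2 (by linarith))
      (by linarith : x0 < (x0 + u) / 2)
    exact absurd (hx0 ((x0 + u) / 2)) (not_le.2 this)
  have hfin : ∀ x, deriv T x ≤ l := by
    intro x
    rw [(hTd x).deriv, div_le_iff₀ (Real.exp_pos _)]
    have := hDle x
    have e : D x = Real.exp (-V x) - l * Real.exp (-W (T x)) := rfl
    linarith
  refine ⟨?_, hfin⟩
  apply lipschitzWith_of_nnnorm_deriv_le (fun x => (hTd x).differentiableAt)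
  intro x
  rw [← NNReal.coe_le_coe, coe_nnnorm, Real.coe_toNNReal _ hl0.le, Real.norm_eq_abs,
    abs_of_nonneg hTmono.deriv_nonneg]
  exact hfin x
end

section
/- Let ν = ρ dx be a probability measure on ℝ^d with ρ ∈ W^{1,1}_loc(ℝ^d) and let p ≥ 1 be such that ∫_{{ρ>0}} (‖∇ρ‖/ρ)^p ρ dx < ∞ (with the convention ∇ρ/ρ := 0 on {ρ = 0}). Then there exists a sequence of probability densities ρ_n on ℝ^d such that: (1) the measures ρ_n dx converge to ν in total variation; (2) ∫ (‖∇ρ_n‖/ρ_n)^p ρ_n dx → ∫_{{ρ>0}} (‖∇ρ‖/ρ)^p ρ dx (with the same convention on {ρ_n = 0}); (3) every ρ_n is C^∞ and nonnegative; (4) for every i and n the partial derivative ∂_{x_i}ρ_n is bounded and Lebesgue-integrable on ℝ^d. -/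
open MeasureTheory Real Set

noncomputable section

/-- ℓ² norm of a vector in `Fin d → ℝ`. -/
def l2norm {d : ℕ} (v : Fin d → ℝ) : ℝ := Real.sqrt (∑ i, v i ^ 2)

/-- Test functions on ℝ^d. -/
def IsTest {d : ℕ} (φ : (Fin d → ℝ) → ℝ) : Prop :=
  ContDiff ℝ (⊤ : ℕ∞) φ ∧ HasCompactSupport φ

/-- i-th partial derivative. -/
def pd {d : ℕ} (i : Fin d) (f : (Fin d → ℝ) → ℝ) (x : Fin d → ℝ) : ℝ :=
  fderiv ℝ f x (Pi.single i 1)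

open Filter Topology in
theorem aux_scheffe {α : Type*} [MeasurableSpace α] {μ : Measure α} (F : ℕ → α → ℝ) (f : α → ℝ)
    (hF : ∀ n, Integrable (F n) μ) (hf : Integrable f μ) (hf0 : ∀ x, 0 ≤ f x)
    (hF0 : ∀ n x, 0 ≤ F n x)
    (hlim : ∀ᵐ x ∂μ, 0 < f x → Tendsto (fun n => F n x) atTop (𝓝 (f x))) :
    Tendsto (fun n => ∫ x, max (f x - F n x) 0 ∂μ) atTop (𝓝 0) := by
  have h := tendsto_integral_of_dominated_convergence (μ := μ)
    (F := fun n x => max (f x - F n x) 0) (f := fun _ => (0:ℝ)) f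
    (fun n => ((hf.sub (hF n)).pos_part).aestronglyMeasurable) hf
    (fun n => Eventually.of_forall fun x => by
      rw [Real.norm_of_nonneg (le_max_right _ _)]
      exact max_le (by linarith [hF0 n x]) (hf0 x)) ?_
  · simpa using h
  · filter_upwards [hlim] with x hx
    rcases (hf0 x).lt_or_eq with h0 | h0
    · have h1 := (tendsto_const_nhds (x := f x)).sub (hx h0)
      have h2 := h1.max (tendsto_const_nhds (x := (0:ℝ)))
      simpa using h2
    · have : ∀ n, max (f x - F n x) 0 = 0 := fun n => max_eq_right (by linarith [hF0 n x])
      simp [this]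

open Filter Topology in
theorem aux_scheffe_abs {α : Type*} [MeasurableSpace α] {μ : Measure α} (F : ℕ → α → ℝ) (f : α → ℝ)
    (hF : ∀ n, Integrable (F n) μ) (hf : Integrable f μ) (hf0 : ∀ x, 0 ≤ f x)
    (hF0 : ∀ n x, 0 ≤ F n x) (hint : ∀ n, ∫ x, F n x ∂μ = ∫ x, f x ∂μ)
    (hlim : ∀ᵐ x ∂μ, 0 < f x → Tendsto (fun n => F n x) atTop (𝓝 (f x))) :
    Tendsto (fun n => ∫ x, |F n x - f x| ∂μ) atTop (𝓝 0) := by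
  have h := (aux_scheffe F f hF hf hf0 hF0 hlim).const_mul 2
  rw [mul_zero] at h
  refine h.congr fun n => ?_
  have e : ∀ x, |F n x - f x| = 2 * max (f x - F n x) 0 + (F n x - f x) := by
    intro x
    rcases le_total (f x) (F n x) with h | h
    · rw [abs_of_nonneg (by linarith), max_eq_right (by linarith)]; ring
    · rw [abs_of_nonpos (by linarith), max_eq_left (by linarith)]; ring
  simp_rw [e]
  have i1 : Integrable (fun x => 2 * max (f x - F n x) 0) μ :=
    ((hf.sub (hF n)).pos_part).const_mul 2
  have i2 : Integrable (fun x => F n x - f x) μ := (hF n).sub hf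
  rw [integral_add i1 i2, integral_sub (hF n) hf, hint n, integral_const_mul]
  ring

/-- the bump functions -/
def bmp (d n : ℕ) : ContDiffBump (0 : Fin d → ℝ) :=
  ⟨1 / ((n:ℝ) + 1), 2 * (1 / ((n:ℝ) + 1)), by positivity, by
    have : 0 < 1 / ((n:ℝ) + 1) := by positivity
    linarith⟩

/-- the mollifier -/
def eta (d n : ℕ) : (Fin d → ℝ) → ℝ := (bmp d n).normed volume

/-- mollification -/
def cv {d : ℕ} (n : ℕ) (f : (Fin d → ℝ) → ℝ) : (Fin d → ℝ) → ℝ :=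
  convolution (eta d n) f (ContinuousLinearMap.lsmul ℝ ℝ) volume

theorem eta_nonneg (d n : ℕ) (x) : 0 ≤ eta d n x := (bmp d n).nonneg_normed x
theorem eta_contDiff (d n : ℕ) : ContDiff ℝ (⊤ : ℕ∞) (eta d n) := (bmp d n).contDiff_normed
theorem eta_supp (d n : ℕ) : HasCompactSupport (eta d n) := (bmp d n).hasCompactSupport_normed
theorem eta_int (d n : ℕ) : Integrable (eta d n) := (bmp d n).integrable_normed
theorem eta_integral (d n : ℕ) : ∫ x, eta d n x = 1 := (bmp d n).integral_normed
theorem eta_zero (d n : ℕ) (x : Fin d → ℝ) (hx : 2 ≤ ‖x‖) : eta d n x = 0 := by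
  have : x ∉ Function.support (eta d n) := by
    rw [eta, ContDiffBump.support_normed_eq]
    simp only [Metric.mem_ball, dist_zero_right, not_lt, bmp]
    refine le_trans ?_ hx
    have : 1 / ((n:ℝ) + 1) ≤ 1 := by
      rw [div_le_one (by positivity)]; linarith [(Nat.cast_nonneg n : (0:ℝ) ≤ n)]
    linarith
  simpa using this

open Filter Topology in
theorem cv_tendsto {d : ℕ} {f : (Fin d → ℝ) → ℝ} (hf : LocallyIntegrable f volume) :
    ∀ᵐ x, Tendsto (fun n => cv n f x) atTop (𝓝 (f x)) := by
  refine ContDiffBump.ae_convolution_tendsto_right_of_locallyIntegrable (K := 2)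
    (φ := fun n => bmp d n) ?_ ?_ hf
  · have := (tendsto_one_div_add_atTop_nhds_zero_nat (𝕜 := ℝ)).const_mul 2
    simpa [bmp] using this
  · exact Eventually.of_forall fun n => le_of_eq rfl

theorem cv_eq {d : ℕ} (n : ℕ) (f : (Fin d → ℝ) → ℝ) (x : Fin d → ℝ) :
    cv n f x = ∫ t, eta d n (x - t) * f t := by
  rw [cv, convolution_lsmul_swap]; rfl

theorem cv_integrand {d : ℕ} (n : ℕ) {f : (Fin d → ℝ) → ℝ} (hf : LocallyIntegrable f volume)
    (x : Fin d → ℝ) : Integrable (fun t => eta d n (x - t) * f t) := by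
  have h1 : Continuous (fun t => eta d n (x - t)) :=
    (eta_contDiff d n).continuous.comp (continuous_const.sub continuous_id)
  have h2 : HasCompactSupport (fun t => eta d n (x - t)) :=
    (eta_supp d n).comp_homeomorph (Homeomorph.subLeft x)
  exact hf.integrable_smul_left_of_hasCompactSupport h1 h2

theorem cv_integrable {d : ℕ} (n : ℕ) {f : (Fin d → ℝ) → ℝ} (hf : Integrable f volume) :
    Integrable (cv n f) := (eta_int d n).integrable_convolution _ hf

theorem cv_integral {d : ℕ} (n : ℕ) {f : (Fin d → ℝ) → ℝ} (hf : Integrable f volume) :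
    ∫ x, cv n f x = ∫ x, f x := by
  rw [cv, integral_convolution _ (eta_int d n) hf, eta_integral]; simp

theorem cv_nonneg {d : ℕ} (n : ℕ) {f : (Fin d → ℝ) → ℝ} (hf : ∀ x, 0 ≤ f x) (x) :
    0 ≤ cv n f x := by
  rw [cv_eq]; exact integral_nonneg fun t => mul_nonneg (eta_nonneg _ _ _) (hf t)

theorem cv_contDiff {d : ℕ} (n : ℕ) {f : (Fin d → ℝ) → ℝ} (hf : LocallyIntegrable f volume) :
    ContDiff ℝ (⊤ : ℕ∞) (cv n f) :=
  HasCompactSupport.contDiff_convolution_left _ (eta_supp d n) (eta_contDiff d n) hf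

theorem cv_sub {d : ℕ} (n : ℕ) {f g : (Fin d → ℝ) → ℝ} (hf : LocallyIntegrable f volume)
    (hg : LocallyIntegrable g volume) (x) : cv n (fun x => f x - g x) x = cv n f x - cv n g x := by
  rw [cv_eq, cv_eq, cv_eq, ← integral_sub (cv_integrand n hf x) (cv_integrand n hg x)]
  simp_rw [mul_sub]

open Filter Topology in
theorem cv_L1_nonneg {d : ℕ} {f : (Fin d → ℝ) → ℝ} (hf : Integrable f volume)
    (h0 : ∀ x, 0 ≤ f x) :
    Tendsto (fun n => ∫ x, |cv n f x - f x|) atTop (𝓝 0) := by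
  refine aux_scheffe_abs _ _ (fun n => cv_integrable n hf) hf h0 (fun n => cv_nonneg n h0)
    (fun n => cv_integral n hf) ?_
  filter_upwards [cv_tendsto hf.locallyIntegrable] with x hx _ using hx

open Filter Topology in
theorem cv_L1 {d : ℕ} {f : (Fin d → ℝ) → ℝ} (hf : Integrable f volume) :
    Tendsto (fun n => ∫ x, |cv n f x - f x|) atTop (𝓝 0) := by
  have hp : Integrable (fun x => max (f x) 0) := hf.pos_part
  have hn : Integrable (fun x => max (-f x) 0) := hf.neg_part
  have h := (cv_L1_nonneg hp (fun x => le_max_right _ _)).add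
    (cv_L1_nonneg hn (fun x => le_max_right _ _))
  rw [add_zero] at h
  refine squeeze_zero (fun n => integral_nonneg fun x => abs_nonneg _) (fun n => ?_) h
  have i1 := ((cv_integrable n hp).sub hp).abs
  have i2 := ((cv_integrable n hn).sub hn).abs
  simp only [Pi.sub_apply] at i1 i2
  rw [← integral_add i1 i2]
  refine integral_mono ((cv_integrable n hf).sub hf).abs (i1.add i2) fun x => ?_
  have e : f = fun x => max (f x) 0 - max (-f x) 0 := by
    funext x
    rcases le_total (f x) 0 with h | h
    · rw [max_eq_right h, max_eq_left (by linarith)]; ring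
    · rw [max_eq_left h, max_eq_right (by linarith)]; ring
  have e1 : cv n f x = cv n (fun x => max (f x) 0) x - cv n (fun x => max (-f x) 0) x := by
    conv_lhs => rw [e]
    exact cv_sub n hp.locallyIntegrable hn.locallyIntegrable x
  have e2 := congrFun e x
  change |cv n f x - f x| ≤ _ + _
  rw [e1]
  conv_lhs => rw [e2]
  refine le_trans (le_of_eq ?_) (abs_sub _ _)
  congr 1; ring

theorem pd_cv_eq {d : ℕ} (n : ℕ) {f : (Fin d → ℝ) → ℝ} (hf : LocallyIntegrable f volume)
    (i : Fin d) (x : Fin d → ℝ) : pd i (cv n f) x = ∫ t, f t * pd i (eta d n) (x - t) := by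
  have hc1 : ContDiff ℝ 1 (eta d n) := (eta_contDiff d n).of_le (by exact_mod_cast le_top)
  have h := HasCompactSupport.hasFDerivAt_convolution_left (ContinuousLinearMap.lsmul ℝ ℝ)
    (eta_supp d n) hc1 hf x
  have hex : ConvolutionExistsAt (fderiv ℝ (eta d n)) f x
      (ContinuousLinearMap.precompL (Fin d → ℝ) (ContinuousLinearMap.lsmul ℝ ℝ)) volume :=
    ((eta_supp d n).fderiv ℝ).convolutionExists_left _ (hc1.continuous_fderiv (by simp)) hf x
  rw [pd, cv, h.fderiv, convolution_eq_swap, ContinuousLinearMap.integral_apply]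
  · congr 1; funext t
    simp [pd, mul_comm]
  · exact hex.integrable_swap

theorem pd_cv {d : ℕ} (n : ℕ) {f g : (Fin d → ℝ) → ℝ} (hf : LocallyIntegrable f volume)
    (i : Fin d) (hw : ∀ φ : (Fin d → ℝ) → ℝ, IsTest φ →
      ∫ x, f x * pd i φ x = - ∫ x, g x * φ x) (x : Fin d → ℝ) :
    pd i (cv n f) x = cv n g x := by
  have h1 := hw (fun t => eta d n (x - t))
    ⟨(eta_contDiff d n).comp (contDiff_const.sub contDiff_id),
      (eta_supp d n).comp_homeomorph (Homeomorph.subLeft x)⟩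
  have h2 : ∀ t, pd i (fun t => eta d n (x - t)) t = - pd i (eta d n) (x - t) := by
    intro t
    have h3 := (((eta_contDiff d n).differentiable (by simp)) (x - t)).hasFDerivAt.comp t
      ((hasFDerivAt_id t).const_sub x)
    have h4 : fderiv ℝ (fun t => eta d n (x - t)) t = _ := h3.fderiv
    rw [pd, pd, h4]; simp
  simp_rw [h2, mul_neg, integral_neg, neg_inj] at h1
  rw [pd_cv_eq n hf, h1, cv_eq]
  simp_rw [mul_comm]

theorem test_pd {d : ℕ} {φ : (Fin d → ℝ) → ℝ} (hφ : IsTest φ) (i : Fin d) :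
    Continuous (pd i φ) ∧ HasCompactSupport (pd i φ) := by
  constructor
  · exact (hφ.1.continuous_fderiv (by simp)).clm_apply continuous_const
  · exact hφ.2.fderiv_apply (𝕜 := ℝ) (Pi.single i 1)

theorem cv_congr {d : ℕ} (n : ℕ) (g : (Fin d → ℝ) → ℝ) (R : ℝ) (x : Fin d → ℝ) (hx : ‖x‖ ≤ R) :
    cv n g x = cv n ((Metric.closedBall 0 (R + 2)).indicator g) x := by
  rw [cv_eq, cv_eq]
  congr 1; funext t
  by_cases ht : t ∈ Metric.closedBall (0 : Fin d → ℝ) (R + 2)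
  · rw [indicator_of_mem ht]
  · rw [indicator_of_notMem ht, eta_zero, zero_mul, zero_mul]
    simp only [Metric.mem_closedBall, dist_zero_right, not_le] at ht
    have := norm_sub_norm_le t x
    rw [norm_sub_rev] at this
    linarith

open Filter Topology in
theorem chain_exp {d : ℕ} {ρ g : (Fin d → ℝ) → ℝ} (i : Fin d) (h0 : ∀ x, 0 ≤ ρ x)
    (hρ : LocallyIntegrable ρ volume) (hg : LocallyIntegrable g volume)
    (hw : ∀ φ : (Fin d → ℝ) → ℝ, IsTest φ →
      ∫ x, ρ x * pd i φ x = - ∫ x, g x * φ x) (φ : (Fin d → ℝ) → ℝ) (hφ : IsTest φ) (k : ℝ)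
    (hk : 0 ≤ k) :
    ∫ x, exp (-k * ρ x) * pd i φ x = k * ∫ x, exp (-k * ρ x) * (φ x * g x) := by
  obtain ⟨R, hR⟩ : ∃ R, ∀ x, φ x ≠ 0 → ‖x‖ ≤ R := by
    obtain ⟨R, hR⟩ := hφ.2.isCompact.isBounded.subset_closedBall (0 : Fin d → ℝ)
    exact ⟨R, fun x hx => by simpa using hR (subset_tsupport _ hx)⟩
  obtain ⟨C, hC⟩ : ∃ C, ∀ x, ‖φ x‖ ≤ C := hφ.2.exists_bound_of_continuous hφ.1.continuous
  set G := (Metric.closedBall (0 : Fin d → ℝ) (R + 2)).indicator g with hG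
  have hGi : Integrable G := by
    rw [hG, integrable_indicator_iff Metric.isClosed_closedBall.measurableSet]
    exact hg.integrableOn_isCompact (isCompact_closedBall _ _)
  obtain ⟨hpc, hps⟩ := test_pd hφ i
  have hpi : Integrable (pd i φ) := hpc.integrable_of_hasCompactSupport hps
  -- exp facts
  have hE1 : ∀ n x, |exp (-k * cv n ρ x)| ≤ 1 := by
    intro n x
    rw [abs_of_pos (exp_pos _), exp_le_one_iff]
    have := mul_nonneg hk (cv_nonneg n h0 x)
    linarith
  have hcc : ∀ n, ContDiff ℝ (⊤ : ℕ∞) (fun x => exp (-k * cv n ρ x)) := fun n =>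
    (contDiff_const.mul (cv_contDiff n hρ)).exp
  have hEm : ∀ n, Continuous (fun x => exp (-k * cv n ρ x)) := fun n => (hcc n).continuous
  have hElim : ∀ᵐ x, Tendsto (fun n => exp (-k * cv n ρ x)) atTop (𝓝 (exp (-k * ρ x))) := by
    filter_upwards [cv_tendsto hρ] with x hx
    exact (continuous_exp.tendsto _).comp (hx.const_mul _)
  have dct : ∀ h : (Fin d → ℝ) → ℝ, Integrable h →
      Tendsto (fun n => ∫ x, exp (-k * cv n ρ x) * h x) atTop (𝓝 (∫ x, exp (-k * ρ x) * h x)) := by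
    intro h hh
    refine tendsto_integral_of_dominated_convergence (fun x => ‖h x‖)
      (fun n => (hEm n).aestronglyMeasurable.mul hh.aestronglyMeasurable) hh.norm ?_ ?_
    · intro n
      refine Eventually.of_forall fun x => ?_
      rw [norm_mul]
      exact mul_le_of_le_one_left (norm_nonneg _) (hE1 n x)
    · filter_upwards [hElim] with x hx using hx.mul_const _
  have hφG : ∀ x, φ x * g x = φ x * G x := by
    intro x
    by_cases hx : φ x = 0
    · simp [hx]
    · have : x ∈ Metric.closedBall (0 : Fin d → ℝ) (R + 2) := by
        simp; linarith [hR x hx]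
      rw [hG, indicator_of_mem this]
  have hφGi : Integrable (fun x => φ x * G x) :=
    hGi.bdd_mul hφ.1.continuous.aestronglyMeasurable (Eventually.of_forall hC)
  have step : ∀ n, ∫ x, exp (-k * cv n ρ x) * pd i φ x =
      k * ∫ x, exp (-k * cv n ρ x) * (φ x * cv n G x) := by
    intro n
    have hd : ∀ x, fderiv ℝ (fun x => exp (-k * cv n ρ x)) x (Pi.single i 1) * φ x
        = -k * (exp (-k * cv n ρ x) * (φ x * cv n G x)) := by
      intro x
      have h1 := ((((cv_contDiff n hρ).differentiable (by simp)) x).hasFDerivAt.const_mul (-k)).exp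
      rw [h1.fderiv]
      have h2 := pd_cv n hρ i hw x
      rw [pd] at h2
      by_cases hx : φ x = 0
      · simp [hx]
      · rw [cv_congr n g R x (hR x hx)] at h2
        simp only [_root_.smul_apply, smul_eq_mul, h2]
        ring
    have hcont : Continuous (fun x => fderiv ℝ (fun x => exp (-k * cv n ρ x)) x (Pi.single i 1)) :=
      ((hcc n).continuous_fderiv (by simp)).clm_apply continuous_const
    have := integral_mul_fderiv_eq_neg_fderiv_mul_of_integrable (μ := volume)
      (f := fun x => exp (-k * cv n ρ x)) (g := φ) (v := Pi.single i 1)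
      ((hcont.mul hφ.1.continuous).integrable_of_hasCompactSupport hφ.2.mul_left)
      (((hEm n).mul hpc).integrable_of_hasCompactSupport hps.mul_left)
      (((hEm n).mul hφ.1.continuous).integrable_of_hasCompactSupport hφ.2.mul_left)
      (fun x _ => ((hcc n).differentiable (by simp)) x)
      (fun x _ => (hφ.1.differentiable (by simp)) x)
    simp_rw [hd] at this
    rw [integral_const_mul] at this
    unfold pd
    rw [this]; ring
  have hbi : ∀ n (h : (Fin d → ℝ) → ℝ), Integrable h →
      Integrable (fun x => exp (-k * cv n ρ x) * (φ x * h x)) := by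
    intro n h hh
    exact (hh.bdd_mul hφ.1.continuous.aestronglyMeasurable (Eventually.of_forall hC)).bdd_mul
      (hEm n).aestronglyMeasurable (Eventually.of_forall (hE1 n))
  have lim2 : Tendsto (fun n => ∫ x, exp (-k * cv n ρ x) * (φ x * cv n G x)) atTop
      (𝓝 (∫ x, exp (-k * ρ x) * (φ x * G x))) := by
    have hz : Tendsto (fun n => ∫ x, exp (-k * cv n ρ x) * (φ x * (cv n G x - G x))) atTop
        (𝓝 0) := by
      have hC0 := (cv_L1 hGi).const_mul C
      rw [mul_zero] at hC0
      refine squeeze_zero_norm (fun n => ?_) hC0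
      rw [← integral_const_mul]
      have hi : Integrable (fun x => cv n G x - G x) := (cv_integrable n hGi).sub hGi
      refine norm_integral_le_of_norm_le (hi.abs.const_mul C) (Eventually.of_forall fun x => ?_)
      rw [norm_mul, norm_mul]
      have a1 := hE1 n x
      have a2 := hC x
      rw [← Real.norm_eq_abs] at *
      calc _ ≤ 1 * (C * ‖cv n G x - G x‖) := by gcongr
        _ = _ := one_mul _
    have := hz.add (dct _ hφGi)
    rw [zero_add] at this
    refine this.congr fun n => ?_
    rw [← integral_add (hbi n (fun x => cv n G x - G x) ((cv_integrable n hGi).sub hGi)) (hbi n _ hGi)]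
    congr 1; funext x; ring
  simp_rw [hφG]
  refine tendsto_nhds_unique (dct _ hpi) ?_
  simp_rw [step]
  exact lim2.const_mul k

open Filter Topology in
theorem zero_set {d : ℕ} {ρ g : (Fin d → ℝ) → ℝ} (i : Fin d) (h0 : ∀ x, 0 ≤ ρ x)
    (hρ : LocallyIntegrable ρ volume) (hg : LocallyIntegrable g volume)
    (hw : ∀ φ : (Fin d → ℝ) → ℝ, IsTest φ →
      ∫ x, ρ x * pd i φ x = - ∫ x, g x * φ x) :
    ∀ᵐ x, ρ x = 0 → g x = 0 := by
  classical
  have hlimp : ∀ x, Tendsto (fun k : ℕ => exp (-(k:ℝ) * ρ x)) atTop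
      (𝓝 (if ρ x = 0 then 1 else 0)) := by
    intro x
    by_cases hx : ρ x = 0
    · simp [hx]
    · have hpos : 0 < ρ x := lt_of_le_of_ne (h0 x) (Ne.symm hx)
      rw [if_neg hx]
      have := tendsto_exp_neg_atTop_nhds_zero.comp
        ((tendsto_natCast_atTop_atTop (R := ℝ)).atTop_mul_const hpos)
      refine this.congr fun k => ?_
      simp
  have hE1 : ∀ (k : ℕ) x, ‖exp (-(k:ℝ) * ρ x)‖ ≤ 1 := by
    intro k x
    rw [Real.norm_eq_abs, abs_of_pos (exp_pos _), exp_le_one_iff]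
    have := mul_nonneg (Nat.cast_nonneg (α := ℝ) k) (h0 x)
    linarith
  have hEm : ∀ k : ℕ, AEStronglyMeasurable (fun x => exp (-(k:ℝ) * ρ x)) volume := fun k =>
    continuous_exp.comp_aestronglyMeasurable (hρ.aestronglyMeasurable.const_mul _)
  have hm : AEStronglyMeasurable (fun x => (if ρ x = 0 then (1:ℝ) else 0) * g x) volume :=
    aestronglyMeasurable_of_tendsto_ae atTop
      (fun k => (hEm k).mul hg.aestronglyMeasurable)
      (Eventually.of_forall fun x => (hlimp x).mul_const (g x))
  have hli : LocallyIntegrable (fun x => (if ρ x = 0 then (1:ℝ) else 0) * g x) volume := by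
    refine hg.mono hm (Eventually.of_forall fun x => ?_)
    split_ifs <;> simp
  have key := ae_eq_zero_of_integral_contDiff_smul_eq_zero hli ?_
  · filter_upwards [key] with x hx h
    simpa [h] using hx
  intro φ hφ1 hφ2
  have hφ : IsTest φ := ⟨hφ1, hφ2⟩
  obtain ⟨hpc, hps⟩ := test_pd hφ i
  have hpi : Integrable (pd i φ) := hpc.integrable_of_hasCompactSupport hps
  have hgi : Integrable (fun x => φ x * g x) :=
    hg.integrable_smul_left_of_hasCompactSupport hφ1.continuous hφ2
  have l1 : Tendsto (fun k : ℕ => ∫ x, exp (-(k:ℝ) * ρ x) * (φ x * g x)) atTop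
      (𝓝 (∫ x, (if ρ x = 0 then (1:ℝ) else 0) * (φ x * g x))) := by
    refine tendsto_integral_of_dominated_convergence (fun x => ‖φ x * g x‖)
      (fun n => (hEm n).mul hgi.aestronglyMeasurable) hgi.norm ?_ ?_
    · intro n
      refine Eventually.of_forall fun x => ?_
      rw [norm_mul]
      exact mul_le_of_le_one_left (norm_nonneg _) (hE1 n x)
    · exact Eventually.of_forall fun x => (hlimp x).mul_const _
  have l2 : Tendsto (fun k : ℕ => ∫ x, exp (-(k:ℝ) * ρ x) * (φ x * g x)) atTop (𝓝 0) := by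
    have hC0 := (tendsto_one_div_atTop_nhds_zero_nat (𝕜 := ℝ)).mul_const (∫ x, ‖pd i φ x‖)
    rw [zero_mul] at hC0
    refine squeeze_zero_norm' ?_ hC0
    filter_upwards [eventually_gt_atTop 0] with k hk
    have hk' : (0:ℝ) < k := by exact_mod_cast hk
    have e := chain_exp i h0 hρ hg hw φ hφ k hk'.le
    have e2 : ∫ x, exp (-(k:ℝ) * ρ x) * (φ x * g x) =
        1 / (k:ℝ) * ∫ x, exp (-(k:ℝ) * ρ x) * pd i φ x := by
      rw [e]; field_simp
    rw [e2, norm_mul, Real.norm_of_nonneg (by positivity)]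
    gcongr
    refine norm_integral_le_of_norm_le hpi.norm (Eventually.of_forall fun x => ?_)
    rw [norm_mul]
    exact mul_le_of_le_one_left (norm_nonneg _) (hE1 k x)
  have := tendsto_nhds_unique l1 l2
  refine Eq.trans ?_ this
  congr 1; funext x; simp only [smul_eq_mul]; ring

theorem tangent {a u p : ℝ} (ha : 0 ≤ a) (hu : 0 ≤ u) (hp : 1 ≤ p) :
    a ^ p + p * a ^ (p - 1) * (u - a) ≤ u ^ p := by
  rcases ha.eq_or_lt with h | h
  · subst h
    rw [Real.zero_rpow (by linarith)]
    rcases hp.eq_or_lt with h1 | h1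
    · subst h1; simp
    · rw [Real.zero_rpow (by linarith)]
      simp; positivity
  · have hb := one_add_mul_self_le_rpow_one_add (s := u / a - 1) (by
      have : 0 ≤ u / a := by positivity
      linarith) hp
    have e : 1 + (u / a - 1) = u / a := by ring
    rw [e, Real.div_rpow hu ha, le_div_iff₀ (by positivity)] at hb
    refine le_trans (le_of_eq ?_) hb
    rw [Real.rpow_sub_one h.ne']
    field_simp

theorem l2norm_nonneg {d : ℕ} (v : Fin d → ℝ) : 0 ≤ l2norm v := Real.sqrt_nonneg _

theorem abs_le_l2norm {d : ℕ} (v : Fin d → ℝ) (i : Fin d) : |v i| ≤ l2norm v := by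
  rw [l2norm, ← Real.sqrt_sq_eq_abs]
  exact Real.sqrt_le_sqrt (Finset.single_le_sum (f := fun i => v i ^ 2)
    (fun j _ => sq_nonneg _) (Finset.mem_univ i))

theorem l2norm_cont {d : ℕ} : Continuous (l2norm (d := d)) := by
  unfold l2norm; fun_prop

theorem l2norm_le_sum {d : ℕ} (v : Fin d → ℝ) : l2norm v ≤ ∑ i, |v i| := by
  rw [l2norm]
  refine Real.sqrt_le_iff.2 ⟨Finset.sum_nonneg fun i _ => abs_nonneg _, ?_⟩
  have := Finset.sum_sq_le_sq_sum_of_nonneg (s := Finset.univ) (f := fun i => |v i|)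
    (fun i _ => abs_nonneg _)
  simpa only [sq_abs] using this

theorem l2norm_cs {d : ℕ} (v w : Fin d → ℝ) : ∑ i, v i * w i ≤ l2norm v * l2norm w :=
  Real.sum_mul_le_sqrt_mul_sqrt _ _ _

theorem l2norm_locInt {d : ℕ} {g : (Fin d → ℝ) → Fin d → ℝ}
    (hg : ∀ i, LocallyIntegrable (fun x => g x i) volume) :
    LocallyIntegrable (fun x => l2norm (g x)) volume := by
  have hm : AEStronglyMeasurable g volume :=
    (aemeasurable_pi_lambda _ fun i => (hg i).aestronglyMeasurable.aemeasurable).aestronglyMeasurable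
  have hs : LocallyIntegrable (fun x => ∑ i, |g x i|) volume := by
    have := locallyIntegrable_finsetSum (μ := volume) Finset.univ
      (f := fun i x => |g x i|) (fun i _ => (hg i).mono
        (hg i).aestronglyMeasurable.norm (Filter.Eventually.of_forall fun x => by simp))
    simpa using this
  refine hs.mono (l2norm_cont.comp_aestronglyMeasurable hm) (Filter.Eventually.of_forall fun x => ?_)
  rw [Real.norm_of_nonneg (l2norm_nonneg _),
    Real.norm_of_nonneg (Finset.sum_nonneg fun i _ => abs_nonneg _)]
  exact l2norm_le_sum _

theorem l2norm_cv_le {d : ℕ} (n : ℕ) {g : (Fin d → ℝ) → Fin d → ℝ}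
    (hg : ∀ i, LocallyIntegrable (fun x => g x i) volume) (x : Fin d → ℝ) :
    l2norm (fun i => cv n (fun y => g y i) x) ≤ cv n (fun y => l2norm (g y)) x := by
  set v : Fin d → ℝ := fun i => cv n (fun y => g y i) x with hv
  rcases (l2norm_nonneg v).eq_or_lt with h | h
  · rw [← h]; exact cv_nonneg n (fun y => l2norm_nonneg _) x
  have h1 : l2norm v * l2norm v = ∑ i, v i * v i := by
    rw [l2norm, Real.mul_self_sqrt (Finset.sum_nonneg fun i _ => sq_nonneg _)]
    simp_rw [sq]
  have h2 : ∑ i, v i * v i = ∫ t, ∑ i, v i * (eta d n (x - t) * g t i) := by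
    rw [integral_finsetSum _ (fun i _ => (cv_integrand n (hg i) x).const_mul _)]
    refine Finset.sum_congr rfl fun i _ => ?_
    rw [integral_const_mul, ← cv_eq n (fun y => g y i)]
  have h3 : ∫ t, ∑ i, v i * (eta d n (x - t) * g t i) ≤
      ∫ t, l2norm v * (eta d n (x - t) * l2norm (g t)) := by
    refine integral_mono (integrable_finsetSum _ fun i _ => (cv_integrand n (hg i) x).const_mul _)
      ((cv_integrand n (l2norm_locInt hg) x).const_mul _) fun t => ?_
    have := mul_le_mul_of_nonneg_left (l2norm_cs v (g t)) (eta_nonneg d n (x - t))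
    refine le_trans (le_of_eq ?_) (this.trans (le_of_eq ?_))
    · rw [Finset.mul_sum]; exact Finset.sum_congr rfl fun i _ => by ring
    · ring
  rw [← h2, ← h1, integral_const_mul, ← cv_eq n (fun y => l2norm (g y))] at h3
  exact le_of_mul_le_mul_left h3 h

theorem jensen {d : ℕ} (n : ℕ) {ρ : (Fin d → ℝ) → ℝ} {g : (Fin d → ℝ) → Fin d → ℝ} {p : ℝ}
    (hp : 1 ≤ p) (h0 : ∀ x, 0 ≤ ρ x) (hρ : LocallyIntegrable ρ volume)
    (hg : ∀ i, LocallyIntegrable (fun x => g x i) volume)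
    (hz : ∀ᵐ x, ρ x = 0 → l2norm (g x) = 0)
    (hF : LocallyIntegrable (fun x => (l2norm (g x) / ρ x) ^ p * ρ x) volume) (x : Fin d → ℝ) :
    (l2norm (fun i => cv n (fun y => g y i) x) / cv n ρ x) ^ p * cv n ρ x ≤
      cv n (fun x => (l2norm (g x) / ρ x) ^ p * ρ x) x := by
  have hu0 : ∀ y, 0 ≤ l2norm (g y) / ρ y := fun y => div_nonneg (l2norm_nonneg _) (h0 y)
  rcases (cv_nonneg n h0 x).eq_or_lt with h | h
  · rw [← h, mul_zero]
    exact cv_nonneg n (fun y => mul_nonneg (Real.rpow_nonneg (hu0 y) _) (h0 y)) x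
  set R := cv n ρ x with hR
  set A := cv n (fun y => l2norm (g y)) x with hA
  have hA0 : 0 ≤ A := cv_nonneg n (fun y => l2norm_nonneg _) x
  set a := A / R with ha
  have ha0 : 0 ≤ a := by positivity
  have haR : a * R = A := by rw [ha]; field_simp
  have s1 : (l2norm (fun i => cv n (fun y => g y i) x) / R) ^ p * R ≤ a ^ p * R := by
    gcongr
    · exact div_nonneg (l2norm_nonneg _) h.le
    · rw [ha]; gcongr; exact l2norm_cv_le n hg x
  refine s1.trans ?_
  set c := p * a ^ (p - 1) with hc
  have i1 := (cv_integrand n hρ x).const_mul (a ^ p)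
  have i2 := (cv_integrand n (l2norm_locInt hg) x).const_mul c
  have i3 := (cv_integrand n hρ x).const_mul (c * a)
  have i12 : Integrable (fun t => a ^ p * (eta d n (x - t) * ρ t)
      + c * (eta d n (x - t) * l2norm (g t))) volume := i1.add i2
  have e : a ^ p * R = ∫ t, (a ^ p * (eta d n (x - t) * ρ t)
      + c * (eta d n (x - t) * l2norm (g t)) - c * a * (eta d n (x - t) * ρ t)) := by
    rw [integral_sub i12 i3, integral_add i1 i2, integral_const_mul, integral_const_mul,
      integral_const_mul, ← cv_eq n ρ, ← cv_eq n (fun y => l2norm (g y)), ← hR, ← hA, ← haR]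
    ring
  rw [e, cv_eq]
  refine integral_mono_ae (i12.sub i3) (cv_integrand n hF x) ?_
  filter_upwards [hz] with t ht
  have hl : l2norm (g t) = l2norm (g t) / ρ t * ρ t := by
    rcases eq_or_ne (ρ t) 0 with h | h
    · rw [ht h, h]; simp
    · field_simp
  have ht2 := mul_le_mul_of_nonneg_left
    (mul_le_mul_of_nonneg_right (tangent ha0 (hu0 t) hp) (h0 t)) (eta_nonneg d n (x - t))
  refine le_trans (le_of_eq ?_) ht2
  conv_lhs => rw [hl]
  ring

/-- Let `ν = ρ dx` be a probability measure on ℝ^d with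
`ρ ∈ W^{1,1}_loc` (with weak gradient `g`) and `p ≥ 1` with
`∫_{ρ>0} (‖∇ρ‖/ρ)^p ρ dx < ∞`.  Then there is a sequence of probability densities
`ρ_n` which are smooth and nonnegative, converge to `ρ` in total variation
(equivalently in `L¹`), whose relative Fisher-type integrals converge to that of `ρ`,
and whose partial derivatives are bounded and integrable. -/
theorem stmt2 (d : ℕ) (ρ : (Fin d → ℝ) → ℝ) (g : (Fin d → ℝ) → Fin d → ℝ)
    (hρ0 : ∀ x, 0 ≤ ρ x) (hρ1 : ∫ x, ρ x = 1)
    (hρloc : LocallyIntegrable ρ volume)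
    (hgloc : ∀ i, LocallyIntegrable (fun x => g x i) volume)
    (hweak : ∀ (i : Fin d) (φ : (Fin d → ℝ) → ℝ), IsTest φ →
      ∫ x, ρ x * pd i φ x = - ∫ x, g x i * φ x)
    (p : ℝ) (hp : 1 ≤ p)
    (hfin : IntegrableOn (fun x => (l2norm (g x) / ρ x) ^ p * ρ x)
      {x | 0 < ρ x} volume) :
    ∃ ρn : ℕ → (Fin d → ℝ) → ℝ,
      -- each ρ_n is a smooth nonnegative probability density
      (∀ n, ContDiff ℝ (⊤ : ℕ∞) (ρn n) ∧ (∀ x, 0 ≤ ρn n x) ∧ ∫ x, ρn n x = 1) ∧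
      -- convergence in total variation (L¹ convergence of the densities)
      Filter.Tendsto (fun n => ∫ x, |ρn n x - ρ x|) Filter.atTop (nhds 0) ∧
      -- convergence of the Fisher-type integrals (convention: integrand ≔ 0 on {ρ_n = 0})
      Filter.Tendsto
        (fun n => ∫ x, if ρn n x = 0 then 0 else
          (l2norm (fun i => pd i (ρn n) x) / ρn n x) ^ p * ρn n x)
        Filter.atTop
        (nhds (∫ x in {x | 0 < ρ x}, (l2norm (g x) / ρ x) ^ p * ρ x)) ∧
      -- partial derivatives are uniformly bounded and integrable
      (∀ (i : Fin d) (n : ℕ), (∃ M : ℝ, ∀ x, |pd i (ρn n) x| ≤ M) ∧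
        Integrable (fun x => pd i (ρn n) x) volume) := by
  have hρi : Integrable ρ volume := by
    by_contra h
    rw [integral_undef h] at hρ1
    exact zero_ne_one hρ1
  have hz : ∀ᵐ x, ρ x = 0 → l2norm (g x) = 0 := by
    have : ∀ᵐ x, ∀ i, ρ x = 0 → g x i = 0 :=
      ae_all_iff.2 fun i => zero_set i hρ0 hρloc (hgloc i) (hweak i)
    filter_upwards [this] with x hx h
    simp [l2norm, fun i => hx i h]
  set F : (Fin d → ℝ) → ℝ := fun x => (l2norm (g x) / ρ x) ^ p * ρ x with hFdef
  have hu0 : ∀ y, 0 ≤ l2norm (g y) / ρ y := fun y => div_nonneg (l2norm_nonneg _) (hρ0 y)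
  have hF0 : ∀ x, 0 ≤ F x := fun y => mul_nonneg (Real.rpow_nonneg (hu0 y) _) (hρ0 y)
  have hFz : ∀ x, x ∉ {x | 0 < ρ x} → F x = 0 := by
    intro x hx
    have : ρ x = 0 := le_antisymm (not_lt.1 hx) (hρ0 x)
    simp [hFdef, this]
  have hFi : Integrable F volume := hfin.integrable_of_forall_notMem_eq_zero hFz
  have hFint : ∫ x in {x | 0 < ρ x}, F x = ∫ x, F x :=
    setIntegral_eq_integral_of_forall_compl_eq_zero hFz
  have hgi : ∀ i, Integrable (fun x => g x i) volume := by
    intro i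
    refine (hFi.add hρi).mono' (hgloc i).aestronglyMeasurable ?_
    filter_upwards [hz] with x hx
    refine (abs_le_l2norm (g x) i).trans ?_
    change _ ≤ F x + ρ x
    rcases (hρ0 x).eq_or_lt with h | h
    · rw [hx h.symm]; exact add_nonneg (hF0 x) (hρ0 x)
    · have t := tangent zero_le_one (hu0 x) hp
      rw [Real.one_rpow, Real.one_rpow] at t
      have hu := hu0 x
      set u := l2norm (g x) / ρ x with hu_def
      have e : l2norm (g x) = u * ρ x := by rw [hu_def]; field_simp
      have t2 : u ≤ u ^ p + 1 := by
        rcases le_total u 1 with h1 | h1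
        · have := Real.rpow_nonneg hu p
          linarith
        · nlinarith
      calc l2norm (g x) = u * ρ x := e
        _ ≤ (u ^ p + 1) * ρ x := by gcongr
        _ = F x + ρ x := by rw [hFdef]; simp only; ring
  have hpd : ∀ n i x, pd i (cv n ρ) x = cv n (fun y => g y i) x := fun n i x =>
    pd_cv n hρloc i (hweak i) x
  refine ⟨fun n => cv n ρ, fun n => ⟨cv_contDiff n hρloc, cv_nonneg n hρ0, ?_⟩,
    cv_L1_nonneg hρi hρ0, ?_, ?_⟩
  · rw [cv_integral n hρi, hρ1]
  · rw [hFint]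
    set Fn : ℕ → (Fin d → ℝ) → ℝ := fun n x =>
      (l2norm (fun i => cv n (fun y => g y i) x) / cv n ρ x) ^ p * cv n ρ x with hFn
    have eF : ∀ n, (∫ x, if cv n ρ x = 0 then 0 else
          (l2norm (fun i => pd i (cv n ρ) x) / cv n ρ x) ^ p * cv n ρ x) = ∫ x, Fn n x := by
      intro n
      congr 1; funext x
      simp_rw [hpd]
      split_ifs with h
      · simp [hFn, h]
      · rfl
    simp_rw [eF]
    have hFn0 : ∀ n x, 0 ≤ Fn n x := fun n x =>
      mul_nonneg (Real.rpow_nonneg (div_nonneg (l2norm_nonneg _) (cv_nonneg n hρ0 x)) _)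
        (cv_nonneg n hρ0 x)
    have hle : ∀ n x, Fn n x ≤ cv n F x := fun n x =>
      jensen n hp hρ0 hρloc hgloc hz hFi.locallyIntegrable x
    have hFni : ∀ n, Integrable (Fn n) volume := by
      intro n
      refine (cv_integrable n hFi).mono' ?_ (Filter.Eventually.of_forall fun x => ?_)
      · have m1 : Measurable (cv n ρ) := (cv_contDiff n hρloc).continuous.measurable
        have m2 : Measurable (fun x => l2norm (fun i => cv n (fun y => g y i) x)) :=
          (l2norm_cont.comp (continuous_pi fun i =>
            (cv_contDiff n (hgloc i)).continuous)).measurable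
        exact (((m2.div m1).pow_const p).mul m1).aestronglyMeasurable
      · rw [Real.norm_of_nonneg (hFn0 n x)]; exact hle n x
    have hlim : ∀ᵐ x, 0 < F x →
        Filter.Tendsto (fun n => Fn n x) Filter.atTop (nhds (F x)) := by
      filter_upwards [cv_tendsto hρloc, ae_all_iff.2 fun i => cv_tendsto (hgloc i)] with x h1 h2 h3
      have hne : ρ x ≠ 0 := by
        intro h
        simp [hFdef, h] at h3
      have h4 : Filter.Tendsto (fun n => l2norm (fun i => cv n (fun y => g y i) x))
          Filter.atTop (nhds (l2norm (g x))) :=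
        (l2norm_cont.tendsto (g x)).comp (tendsto_pi_nhds.2 h2)
      exact ((h4.div h1 hne).rpow_const (Or.inr (by linarith))).mul h1
    have hs := aux_scheffe Fn F hFni hFi hF0 hFn0 hlim
    have hlow := (tendsto_const_nhds (x := ∫ x, F x)).sub hs
    rw [sub_zero] at hlow
    refine tendsto_of_tendsto_of_tendsto_of_le_of_le hlow tendsto_const_nhds (fun n => ?_)
      (fun n => ?_)
    · have ip : Integrable (fun x => max (F x - Fn n x) 0) volume := (hFi.sub (hFni n)).pos_part
      change (∫ x, F x) - (∫ x, max (F x - Fn n x) 0) ≤ ∫ x, Fn n x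
      rw [← integral_sub hFi ip]
      refine integral_mono (hFi.sub ip) (hFni n) fun x => ?_
      have := le_max_left (F x - Fn n x) 0
      change F x - max (F x - Fn n x) 0 ≤ Fn n x
      linarith
    · change (∫ x, Fn n x) ≤ ∫ x, F x
      rw [← cv_integral n hFi]
      exact integral_mono (hFni n) (cv_integrable n hFi) (hle n)
  · intro i n
    constructor
    · obtain ⟨hc, hs⟩ := test_pd ⟨eta_contDiff d n, eta_supp d n⟩ i
      obtain ⟨C, hC⟩ := hs.exists_bound_of_continuous hc
      refine ⟨C, fun x => ?_⟩
      rw [pd_cv_eq n hρloc]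
      have := norm_integral_le_of_norm_le (μ := volume)
        (f := fun t => ρ t * pd i (eta d n) (x - t)) (hρi.const_mul C)
        (Filter.Eventually.of_forall fun t => by
          rw [norm_mul, Real.norm_of_nonneg (hρ0 t), mul_comm]
          exact mul_le_mul_of_nonneg_right (hC _) (hρ0 t))
      rw [integral_const_mul, hρ1, mul_one] at this
      exact this
    · simp_rw [hpd]
      exact cv_integrable n (hgi i)


end
end

section
/- Let μ and ν be Borel probability measures on ℝ^ℕ such that for every n ∈ ℕ both projections μ ∘ P_n^{−1} and ν ∘ P_n^{−1}, where P_n(x) = (x₁,…,xₙ), are absolutely continuous with respect to Lebesgue measure on ℝⁿ. Let T be an increasing triangular mapping whose image measure of μ is ν and S an increasing triangular mapping whose image measure of ν is μ. Then T and S are reciprocal: T(S(x)) = x for ν-almost every x and S(T(x)) = x for μ-almost every x. -/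
open MeasureTheory Real Set

noncomputable section

/-- A Borel map `T : ℝ^ℕ → ℝ^ℕ` is increasing triangular if `T_i` depends only on
`x₁,…,x_i` and is nondecreasing in `x_i`. -/
def IsIncTriangularInf (T : (ℕ → ℝ) → ℕ → ℝ) : Prop :=
  Measurable T ∧
  (∀ (i : ℕ) (x y : ℕ → ℝ), (∀ j ≤ i, x j = y j) → T x i = T y i) ∧
  (∀ (i : ℕ) (x : ℕ → ℝ), Monotone (fun t => T (Function.update x i t) i))

/-- An increasing triangular map preserving a probability measure is a.e. the identity. -/
theorem incTri_self (ν : Measure (ℕ → ℝ)) [IsProbabilityMeasure ν]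
    (R : (ℕ → ℝ) → ℕ → ℝ) (hR : IsIncTriangularInf R) (hp : ν.map R = ν) :
    ∀ᵐ x ∂ν, R x = x := by
  obtain ⟨hm, htri, hmono⟩ := hR
  have key : ∀ i : ℕ, ∀ᵐ x ∂ν, R x i = x i := by
    intro i
    induction i using Nat.strong_induction_on with
    | _ i ih =>
    have hpast : ∀ᵐ x ∂ν, ∀ j, j < i → R x j = x j := by
      rw [ae_all_iff]
      intro j
      by_cases hj : j < i
      · filter_upwards [ih j hj] with x hx _ using hx
      · exact Filter.Eventually.of_forall fun x h => absurd h hj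
    have hmi : Measurable fun x => R x i := (measurable_pi_apply i).comp hm
    have main : ∀ c : ℚ, ∀ᵐ x ∂ν, (R x i ≤ c ↔ x i ≤ c) := by
      intro c
      let D : Set (ℕ → ℝ) := {x | ∀ q : ℚ, c < q → (c : ℝ) < R (Function.update x i (q : ℝ)) i}
      have hD : MeasurableSet D := by
        have : D = ⋂ q : ℚ, ⋂ _ : c < q,
            {x | (c : ℝ) < R (Function.update x i (q : ℝ)) i} := by
          ext x; simp [D]
        rw [this]
        refine MeasurableSet.iInter fun q => MeasurableSet.iInter fun _ => ?_
        refine measurableSet_lt measurable_const (hmi.comp ?_)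
        exact measurable_update_left
      have hDiff : ∀ x y : ℕ → ℝ, (∀ j, j < i → x j = y j) → (x ∈ D ↔ y ∈ D) := by
        intro x y h
        have : ∀ q : ℚ, R (Function.update x i (q : ℝ)) i = R (Function.update y i (q : ℝ)) i := by
          intro q
          apply htri
          intro j hj
          rcases hj.eq_or_lt with rfl | hj
          · simp
          · simp [Function.update_of_ne hj.ne, h j hj]
        simp only [D, mem_setOf_eq, this]
      have hmeas : ∀ E : Set (ℕ → ℝ), MeasurableSet E →
          (∀ x y : ℕ → ℝ, (∀ j, j < i → x j = y j) → (x ∈ E ↔ y ∈ E)) →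
          ν (E ∩ {x | x i ≤ c}) = ν (E ∩ {x | R x i ≤ c}) := by
        intro E hE hEi
        have h1 : MeasurableSet (E ∩ {x : ℕ → ℝ | x i ≤ c}) :=
          hE.inter (measurableSet_le (measurable_pi_apply i) measurable_const)
        conv_lhs => rw [← hp]
        rw [Measure.map_apply hm h1]
        apply measure_congr
        filter_upwards [hpast] with x hx
        apply propext
        change (R x ∈ E ∧ R x i ≤ c) ↔ (x ∈ E ∧ R x i ≤ c)
        rw [hEi _ _ hx]
      have m1 : MeasurableSet {x : ℕ → ℝ | x i ≤ c} :=
        measurableSet_le (measurable_pi_apply i) measurable_const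
      have m2 : MeasurableSet {x : ℕ → ℝ | R x i ≤ c} :=
        measurableSet_le hmi measurable_const
      have e1 : (D ∩ {x | R x i ≤ c} : Set (ℕ → ℝ)) =ᵐ[ν] (D ∩ {x | x i ≤ c} : Set (ℕ → ℝ)) := by
        refine ae_eq_of_subset_of_measure_ge ?_ (hmeas D hD hDiff).le
          (hD.inter m2).nullMeasurableSet (measure_ne_top _ _)
        rintro x ⟨hx, hx2⟩
        refine ⟨hx, ?_⟩
        by_contra hlt
        simp only [mem_setOf_eq, not_le] at hlt hx2
        obtain ⟨q, hq1, hq2⟩ := exists_rat_btwn hlt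
        have h3 := hmono i x hq2.le
        simp only [Function.update_eq_self] at h3
        have h4 := hx q (by exact_mod_cast hq1)
        linarith
      have e2 : (Dᶜ ∩ {x | x i ≤ c} : Set (ℕ → ℝ)) =ᵐ[ν] (Dᶜ ∩ {x | R x i ≤ c} : Set (ℕ → ℝ)) := by
        refine ae_eq_of_subset_of_measure_ge ?_
          (hmeas Dᶜ hD.compl fun x y h => not_congr (hDiff x y h)).ge
          (hD.compl.inter m1).nullMeasurableSet (measure_ne_top _ _)
        rintro x ⟨hx, hx2⟩
        refine ⟨hx, ?_⟩
        simp only [D, mem_compl_iff, mem_setOf_eq, not_forall, not_lt] at hx hx2 ⊢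
        obtain ⟨q, hq1, hq2⟩ := hx
        have hq3 : (c : ℝ) < q := by exact_mod_cast hq1
        have h3 := hmono i x (hx2.trans hq3.le)
        simp only [Function.update_eq_self] at h3
        exact h3.trans hq2
      filter_upwards [e1, e2] with x h1 h2
      have h1' : (x ∈ D ∧ R x i ≤ c) ↔ (x ∈ D ∧ x i ≤ c) := iff_of_eq h1
      have h2' : (x ∉ D ∧ x i ≤ c) ↔ (x ∉ D ∧ R x i ≤ c) := iff_of_eq h2
      tauto
    filter_upwards [ae_all_iff.2 main] with x hx
    apply le_antisymm
    · by_contra! h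
      obtain ⟨q, hq1, hq2⟩ := exists_rat_btwn h
      exact absurd ((hx q).2 hq1.le) (not_le.2 hq2)
    · by_contra! h
      obtain ⟨q, hq1, hq2⟩ := exists_rat_btwn h
      exact absurd ((hx q).1 hq1.le) (not_le.2 hq2)
  filter_upwards [ae_all_iff.2 key] with x hx using funext hx

/-- Composition of increasing triangular maps. -/
theorem incTri_comp (T S : (ℕ → ℝ) → ℕ → ℝ)
    (hT : IsIncTriangularInf T) (hS : IsIncTriangularInf S) :
    IsIncTriangularInf (fun x => T (S x)) := by
  obtain ⟨hTm, hTt, hTi⟩ := hT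
  obtain ⟨hSm, hSt, hSi⟩ := hS
  refine ⟨hTm.comp hSm, ?_, ?_⟩
  · intro i x y h
    exact hTt i _ _ fun j hj => hSt j x y fun k hk => h k (hk.trans hj)
  · intro i x s t hst
    have e : ∀ r : ℝ, T (S (Function.update x i r)) i =
        T (Function.update (S x) i (S (Function.update x i r) i)) i := by
      intro r
      apply hTt
      intro j hj
      rcases hj.eq_or_lt with rfl | hj
      · simp
      · rw [Function.update_of_ne hj.ne]
        apply hSt
        intro k hk
        rw [Function.update_of_ne (hk.trans_lt hj).ne]
    simp only [e s, e t]
    exact hTi i (S x) (hSi i x hst)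

/-- Let `μ` and `ν` be Borel probability measures on ℝ^ℕ whose
finite-dimensional projections are absolutely continuous with respect to Lebesgue
measure. If `T` is an increasing triangular map pushing `μ` onto `ν` and `S` an
increasing triangular map pushing `ν` onto `μ`, then `T ∘ S = id` ν-a.e. and
`S ∘ T = id` μ-a.e. -/
theorem stmt11 (μ ν : Measure (ℕ → ℝ))
    (hμP : IsProbabilityMeasure μ) (hνP : IsProbabilityMeasure ν)
    (hμproj : ∀ n : ℕ, μ.map (fun x (i : Fin n) => x i) ≪ (volume : Measure (Fin n → ℝ)))
    (hνproj : ∀ n : ℕ, ν.map (fun x (i : Fin n) => x i) ≪ (volume : Measure (Fin n → ℝ)))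
    (T S : (ℕ → ℝ) → ℕ → ℝ)
    (hT : IsIncTriangularInf T) (hTpush : μ.map T = ν)
    (hS : IsIncTriangularInf S) (hSpush : ν.map S = μ) :
    (∀ᵐ x ∂ν, T (S x) = x) ∧ (∀ᵐ x ∂μ, S (T x) = x) := by
  constructor
  · refine incTri_self ν (fun x => T (S x)) (incTri_comp T S hT hS) ?_
    have h := Measure.map_map (μ := ν) hT.1 hS.1
    rw [hSpush, hTpush] at h
    exact h.symm
  · refine incTri_self μ (fun x => S (T x)) (incTri_comp S T hS hT) ?_
    have h := Measure.map_map (μ := μ) hS.1 hT.1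
    rw [hTpush, hSpush] at h
    exact h.symm

end
end

section
/- Let S : ℝ^d → ℝ^d be a C¹ diffeomorphism, let ν be a Borel probability measure on ℝ^d and let μ = ν ∘ S^{−1}. Let b : ℝ^d → ℝ^d be a Borel vector field and let ρ be a solution of the continuity equation ∂ₜρ + div_ν(ρ·b) = 0 on [0,T] such that sup_{t∈[0,T]} ∫ ‖b‖ ρ(t,·) dν < ∞. Define c(y) = DS(S^{−1}(y)) · b(S^{−1}(y)) and g(t,y) = ρ(t, S^{−1}(y)). Then each g(t,·) is a probability density with respect to μ and g is a solution of the continuity equation ∂ₜg + div_μ(g·c) = 0 on [0,T]: for every ψ ∈ C_c^∞(ℝ^d) and t ∈ [0,T], ∫ ψ g(t,·) dμ = ∫ ψ g(0,·) dμ + ∫₀ᵗ ∫ ⟨c,∇ψ⟩ g(s,·) dμ ds. -/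
open MeasureTheory Real Set

noncomputable section

/-- Solution of the continuity equation `∂ₜρ + div_m(ρ·v) = 0` on `[0,T]`. -/
def IsSolution {d : ℕ} (m : Measure (Fin d → ℝ)) (v : (Fin d → ℝ) → Fin d → ℝ)
    (ρ : ℝ → (Fin d → ℝ) → ℝ) (T : ℝ) : Prop :=
  Measurable (Function.uncurry ρ) ∧
  (∀ t ∈ Icc (0:ℝ) T, (∀ᵐ x ∂m, 0 ≤ ρ t x) ∧ ∫ x, ρ t x ∂m = 1) ∧
  ∀ φ : (Fin d → ℝ) → ℝ, IsTest φ → ∀ t ∈ Icc (0:ℝ) T,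
    Integrable (fun q : ℝ × (Fin d → ℝ) => (∑ i, v q.2 i * pd i φ q.2) * ρ q.1 q.2)
      ((volume.restrict (Icc 0 t)).prod m) ∧
    ∫ x, φ x * ρ t x ∂m = ∫ x, φ x * ρ 0 x ∂m +
      ∫ s in Icc (0:ℝ) t, (∫ x, (∑ i, v x i * pd i φ x) * ρ s x ∂m)

open Filter Topology ContinuousLinearMap
open scoped Convolution

lemma sum_pd {d : ℕ} (φ : (Fin d → ℝ) → ℝ) (x v : Fin d → ℝ) :
    ∑ i, v i * pd i φ x = fderiv ℝ φ x v := by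
  have := LinearMap.pi_apply_eq_sum_univ (fderiv ℝ φ x : (Fin d → ℝ) →ₗ[ℝ] ℝ) v
  simp only [ContinuousLinearMap.coe_coe] at this
  rw [this]
  refine Finset.sum_congr rfl fun i _ => ?_
  simp only [pd, smul_eq_mul]
  congr 2
  ext j
  simp [Pi.single_apply, eq_comm]

lemma mollify {d : ℕ} (φ : (Fin d → ℝ) → ℝ) (h1 : ContDiff ℝ 1 φ) (hc : HasCompactSupport φ) :
    ∃ R : ℝ, (∀ x, R < ‖x‖ → fderiv ℝ φ x = 0) ∧ ∀ ε > 0, ∃ φ' : (Fin d → ℝ) → ℝ, IsTest φ' ∧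
      (∀ x, ‖φ' x - φ x‖ ≤ ε) ∧ (∀ x, ‖fderiv ℝ φ' x - fderiv ℝ φ x‖ ≤ ε) ∧
      (∀ x, R < ‖x‖ → fderiv ℝ φ' x = 0) := by
  obtain ⟨R, hR⟩ := hc.isCompact.isBounded.subset_closedBall (0 : Fin d → ℝ)
  have hz : ∀ x, R < ‖x‖ → φ x = 0 := fun x hx => by
    by_contra h
    have := hR (subset_tsupport _ h)
    simp at this; linarith
  have hz' : ∀ x, R < ‖x‖ → fderiv ℝ φ x = 0 := fun x hx => by
    by_contra h
    have := hR (support_fderiv_subset ℝ h)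
    simp at this; linarith
  have hdc : Continuous (fderiv ℝ φ) := h1.continuous_fderiv one_ne_zero
  have u1 := hc.uniformContinuous_of_continuous h1.continuous
  have u2 := (hc.fderiv ℝ).uniformContinuous_of_continuous hdc
  refine ⟨R + 1, fun x hx => hz' x (by linarith), fun ε hε => ?_⟩
  obtain ⟨δ1, hδ1, H1⟩ := Metric.uniformContinuous_iff.mp u1 ε hε
  obtain ⟨δ2, hδ2, H2⟩ := Metric.uniformContinuous_iff.mp u2 ε hε
  obtain ⟨δ, hδ, hδm⟩ : ∃ δ > 0, δ ≤ min 1 (min δ1 δ2) := ⟨min 1 (min δ1 δ2), by positivity, le_rfl⟩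
  simp only [le_min_iff] at hδm
  let η : ContDiffBump (0 : Fin d → ℝ) := ⟨δ / 2, δ, half_pos hδ, half_lt_self hδ⟩
  have hηd : η.rOut = δ := rfl
  have hball : ∀ x : Fin d → ℝ, R + 1 < ‖x‖ → ∀ y ∈ Metric.ball x η.rOut, R < ‖y‖ := by
    intro x hx y hy
    rw [Metric.mem_ball, hηd, dist_comm, dist_eq_norm] at hy
    have := norm_sub_norm_le x y
    linarith [hδm.1]
  have hli : LocallyIntegrable (η.normed volume) := η.continuous_normed.locallyIntegrable
  have hfd : ∀ x, HasFDerivAt (η.normed volume ⋆[lsmul ℝ ℝ, volume] φ)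
      ((η.normed volume ⋆[lsmul ℝ ℝ, volume] fderiv ℝ φ) x) x := by
    intro x
    have h := hc.hasFDerivAt_convolution_right (lsmul ℝ ℝ) hli h1 x
    have e : (η.normed volume ⋆[lsmul ℝ ℝ, volume] fderiv ℝ φ) x =
        (η.normed volume ⋆[precompR (Fin d → ℝ) (lsmul ℝ ℝ), volume] fderiv ℝ φ) x := by
      unfold convolution
      congr 1
    rw [e]
    exact h
  refine ⟨η.normed volume ⋆[lsmul ℝ ℝ, volume] φ, ⟨?_, ?_⟩, ?_, ?_, ?_⟩
  · exact η.hasCompactSupport_normed.contDiff_convolution_left _ η.contDiff_normed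
      h1.continuous.locallyIntegrable
  · refine HasCompactSupport.intro (isCompact_closedBall (0 : Fin d → ℝ) (R + 1)) fun x hx => ?_
    simp only [Metric.mem_closedBall, dist_zero_right, not_le] at hx
    have := η.dist_normed_convolution_le (μ := volume) (g := φ) (x₀ := x) (ε := 0)
      h1.continuous.aestronglyMeasurable
      (fun y hy => by rw [hz y (hball x hx y hy), hz x (by linarith)]; simp)
    rw [hz x (by linarith)] at this
    simpa using this
  · intro x
    rw [← dist_eq_norm]
    exact η.dist_normed_convolution_le h1.continuous.aestronglyMeasurable
      fun y hy => (H1 (lt_of_lt_of_le hy hδm.2.1)).le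
  · intro x
    rw [← dist_eq_norm, (hfd x).fderiv]
    exact η.dist_normed_convolution_le hdc.aestronglyMeasurable
      fun y hy => (H2 (lt_of_lt_of_le hy hδm.2.2)).le
  · intro x hx
    rw [(hfd x).fderiv]
    have := η.dist_normed_convolution_le (μ := volume) (g := fderiv ℝ φ) (x₀ := x) (ε := 0)
      hdc.aestronglyMeasurable
      (fun y hy => by rw [hz' y (hball x hx y hy), hz' x (by linarith)]; simp)
    rw [hz' x (by linarith)] at this
    simpa using this

lemma loc_int {d : ℕ} {ν : Measure (Fin d → ℝ)} [IsProbabilityMeasure ν]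
    {b : (Fin d → ℝ) → Fin d → ℝ} {T : ℝ} {ρ : ℝ → (Fin d → ℝ) → ℝ} (hρ : IsSolution ν b ρ T)
    (R : ℝ) {t : ℝ} (ht : t ∈ Icc 0 T) :
    Integrable ((univ ×ˢ Metric.closedBall 0 R).indicator
      fun q : ℝ × (Fin d → ℝ) => ‖b q.2‖ * ‖ρ q.1 q.2‖) ((volume.restrict (Icc 0 t)).prod ν) := by
  have key : ∀ i, Integrable ((univ ×ˢ Metric.closedBall 0 R).indicator
      fun q : ℝ × (Fin d → ℝ) => b q.2 i * ρ q.1 q.2) ((volume.restrict (Icc 0 t)).prod ν) := by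
    intro i
    let χ : ContDiffBump (0 : Fin d → ℝ) := ⟨|R| + 1, |R| + 2, by positivity, by linarith⟩
    have hT : IsTest (fun x : Fin d → ℝ => χ x * x i) := by
      refine ⟨χ.contDiff.mul (contDiff_apply ℝ ℝ i), ?_⟩
      exact χ.hasCompactSupport.mul_right
    have hI := ((hρ.2.2 _ hT t ht).1).indicator
      (MeasurableSet.univ.prod (Metric.isClosed_closedBall (x := (0 : Fin d → ℝ)) (ε := R)).measurableSet)
    refine hI.congr (Filter.Eventually.of_forall fun q => ?_)
    by_cases hq : q ∈ (univ ×ˢ Metric.closedBall (0 : Fin d → ℝ) R : Set (ℝ × (Fin d → ℝ)))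
    swap
    · simp only [indicator_of_notMem hq]
    simp only [indicator_of_mem hq]
    rw [sum_pd]
    have hq2 : ‖q.2‖ ≤ R := by simpa using hq.2
    have : (fun x : Fin d → ℝ => χ x * x i) =ᶠ[𝓝 q.2] (ContinuousLinearMap.proj (R := ℝ) (φ := fun _ : Fin d => ℝ) i) := by
      filter_upwards [Metric.isOpen_ball.mem_nhds (show q.2 ∈ Metric.ball (0 : Fin d → ℝ) (|R| + 1) by
        simp; linarith [le_abs_self R])] with x hx
      rw [χ.one_of_mem_closedBall (Metric.ball_subset_closedBall hx)]
      simp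
    rw [this.fderiv_eq, ContinuousLinearMap.fderiv]
    simp
  have h := (Integrable.of_eval (f := (univ ×ˢ Metric.closedBall 0 R).indicator
      fun q : ℝ × (Fin d → ℝ) => ρ q.1 q.2 • b q.2)
      (μ := (volume.restrict (Icc 0 t)).prod ν) (fun i => by
        convert key i using 1
        ext q
        by_cases hq : q ∈ (univ ×ˢ Metric.closedBall (0 : Fin d → ℝ) R : Set (ℝ × (Fin d → ℝ)))
        · simp only [indicator_of_mem hq]; simp [mul_comm]
        · simp only [indicator_of_notMem hq]; simp)).norm
  convert h using 1
  ext q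
  rw [norm_indicator_eq_indicator_norm]
  simp only [norm_smul, mul_comm]

lemma ext_C1 {d : ℕ} {ν : Measure (Fin d → ℝ)} [IsProbabilityMeasure ν]
    {b : (Fin d → ℝ) → Fin d → ℝ} (hb : Measurable b)
    {T : ℝ} {ρ : ℝ → (Fin d → ℝ) → ℝ} (hρ : IsSolution ν b ρ T)
    (φ : (Fin d → ℝ) → ℝ) (h1 : ContDiff ℝ 1 φ) (hc : HasCompactSupport φ)
    {t : ℝ} (ht : t ∈ Icc 0 T) :
    Integrable (fun q : ℝ × (Fin d → ℝ) => fderiv ℝ φ q.2 (b q.2) * ρ q.1 q.2)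
      ((volume.restrict (Icc 0 t)).prod ν) ∧
    ∫ x, φ x * ρ t x ∂ν = ∫ x, φ x * ρ 0 x ∂ν +
      ∫ s in Icc (0:ℝ) t, (∫ x, fderiv ℝ φ x (b x) * ρ s x ∂ν) := by
  obtain ⟨R, hR, H⟩ := mollify φ h1 hc
  have hρm : Measurable fun q : ℝ × (Fin d → ℝ) => ρ q.1 q.2 := hρ.1
  obtain ⟨C, hC⟩ := h1.continuous.bounded_above_of_compact_support hc
  obtain ⟨C', hC'⟩ := (h1.continuous_fderiv one_ne_zero).bounded_above_of_compact_support (hc.fderiv ℝ)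
  have hmeas : ∀ f : (Fin d → ℝ) → ℝ, ContDiff ℝ 1 f →
      AEStronglyMeasurable (fun q : ℝ × (Fin d → ℝ) => fderiv ℝ f q.2 (b q.2) * ρ q.1 q.2)
      ((volume.restrict (Icc 0 t)).prod ν) := by
    intro f hf
    have h2 : Measurable (fun p : (Fin d → ℝ) × (Fin d → ℝ) => fderiv ℝ f p.1 p.2) :=
      (hf.continuous_fderiv_apply one_ne_zero).measurable
    exact ((h2.comp (measurable_snd.prodMk (hb.comp measurable_snd))).mul hρm).aestronglyMeasurable
  have hD := loc_int hρ R ht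
  have hbd : ∀ (f : (Fin d → ℝ) → ℝ) (K : ℝ), (∀ x, ‖fderiv ℝ f x‖ ≤ K) →
      (∀ x, R < ‖x‖ → fderiv ℝ f x = 0) → ∀ q : ℝ × (Fin d → ℝ),
      ‖fderiv ℝ f q.2 (b q.2) * ρ q.1 q.2‖ ≤ K * ((univ ×ˢ Metric.closedBall 0 R).indicator
      (fun q : ℝ × (Fin d → ℝ) => ‖b q.2‖ * ‖ρ q.1 q.2‖) q) := by
    intro f K hK hz q
    by_cases hq : q ∈ (univ ×ˢ Metric.closedBall (0 : Fin d → ℝ) R : Set (ℝ × (Fin d → ℝ)))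
    · rw [indicator_of_mem hq, norm_mul, ← mul_assoc]
      gcongr
      exact (fderiv ℝ f q.2).le_of_opNorm_le (hK _) _
    · rw [indicator_of_notMem hq, hz q.2 (by simpa using hq)]
      simp
  have hInteg : Integrable (fun q : ℝ × (Fin d → ℝ) => fderiv ℝ φ q.2 (b q.2) * ρ q.1 q.2)
      ((volume.restrict (Icc 0 t)).prod ν) :=
    (hD.const_mul C').mono' (hmeas φ h1) (.of_forall (hbd φ C' hC' hR))
  refine ⟨hInteg, ?_⟩
  have hu : ∀ n : ℕ, (0 : ℝ) < 1 / ((n : ℝ) + 1) := fun n => by positivity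
  have hu1 : ∀ n : ℕ, 1 / ((n : ℝ) + 1) ≤ 1 := fun n => by
    rw [div_le_one (by positivity)]; linarith [(Nat.cast_nonneg n : (0 : ℝ) ≤ n)]
  choose F hF1 hF2 hF3 hF4 using fun n : ℕ => H _ (hu n)
  have hlim : ∀ {E : Type} [NormedAddCommGroup E] (a : ℕ → E) (l : E),
      (∀ n : ℕ, ‖a n - l‖ ≤ 1 / ((n : ℝ) + 1)) → Tendsto a atTop (𝓝 l) := by
    intro E _ a l h
    rw [tendsto_iff_norm_sub_tendsto_zero]
    exact squeeze_zero (fun _ => norm_nonneg _) h tendsto_one_div_add_atTop_nhds_zero_nat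
  have hleft : ∀ s ∈ Icc (0:ℝ) T, Tendsto (fun n => ∫ x, F n x * ρ s x ∂ν) atTop
      (𝓝 (∫ x, φ x * ρ s x ∂ν)) := by
    intro s hs
    have hi : Integrable (ρ s) ν := integrable_of_integral_eq_one (hρ.2.1 s hs).2
    refine tendsto_integral_of_dominated_convergence (fun x => (C + 1) * ‖ρ s x‖)
      (fun n => (hF1 n).1.continuous.aestronglyMeasurable.mul hi.1) (hi.norm.const_mul _)
      (fun n => .of_forall fun x => ?_) (.of_forall fun x => ?_)
    · rw [norm_mul]
      gcongr
      have := norm_add_le (φ x) (F n x - φ x)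
      rw [add_sub_cancel] at this
      linarith [hC x, hF2 n x, hu1 n]
    · exact (hlim _ _ fun n => hF2 n x).mul_const _
  have hright : Tendsto (fun n => ∫ s in Icc (0:ℝ) t, (∫ x, fderiv ℝ (F n) x (b x) * ρ s x ∂ν)) atTop
      (𝓝 (∫ s in Icc (0:ℝ) t, (∫ x, fderiv ℝ φ x (b x) * ρ s x ∂ν))) := by
    have e : ∀ n, Integrable (fun q : ℝ × (Fin d → ℝ) => fderiv ℝ (F n) q.2 (b q.2) * ρ q.1 q.2)
      ((volume.restrict (Icc 0 t)).prod ν) := by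
      intro n
      have := (hρ.2.2 _ (hF1 n) t ht).1
      simpa only [sum_pd] using this
    rw [← integral_prod _ hInteg]
    simp_rw [fun n => (integral_prod _ (e n)).symm]
    refine tendsto_integral_of_dominated_convergence _
      (fun n => (e n).1) (hD.const_mul (C' + 1))
      (fun n => .of_forall fun q => hbd (F n) (C' + 1) (fun x => ?_) (hF4 n) q)
      (.of_forall fun q => ?_)
    · have := norm_add_le (fderiv ℝ φ x) (fderiv ℝ (F n) x - fderiv ℝ φ x)
      rw [add_sub_cancel] at this
      linarith [hC' x, hF3 n x, hu1 n]
    · have := hlim _ _ fun n => hF3 n q.2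
      have h3 : Tendsto (fun n => fderiv ℝ (F n) q.2 (b q.2)) atTop (𝓝 (fderiv ℝ φ q.2 (b q.2))) :=
        ((ContinuousLinearMap.apply ℝ ℝ (b q.2)).continuous.tendsto _).comp this
      exact h3.mul_const _
  have h0 : (0:ℝ) ∈ Icc 0 T := ⟨le_rfl, ht.1.trans ht.2⟩
  refine tendsto_nhds_unique (hleft t ht) (((hleft 0 h0).add hright).congr fun n => ?_)
  have := (hρ.2.2 _ (hF1 n) t ht).2
  simp only [sum_pd] at this
  exact this.symm

/-- (Transfer of solutions.) Let `S : ℝ^d → ℝ^d` be a `C¹`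
diffeomorphism with inverse `Sinv`, `ν` a Borel probability measure, `μ = ν ∘ S⁻¹`,
`b` a Borel vector field and `ρ` a solution of `∂ₜρ + div_ν(ρ·b) = 0` on `[0,T]` with
`sup_{t∈[0,T]} ∫ ‖b‖ ρ(t,·) dν < ∞`. Then `g(t,y) = ρ(t, S⁻¹(y))` is a solution of
`∂ₜg + div_μ(g·c) = 0` on `[0,T]`, where `c(y) = DS(S⁻¹(y))·b(S⁻¹(y))`. -/
theorem stmt13 (d : ℕ) (S Sinv : (Fin d → ℝ) → Fin d → ℝ)
    (hS : ContDiff ℝ 1 S) (hSinv : ContDiff ℝ 1 Sinv)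
    (hleft : Function.LeftInverse Sinv S) (hright : Function.RightInverse Sinv S)
    (ν : Measure (Fin d → ℝ)) (hνP : IsProbabilityMeasure ν)
    (μ : Measure (Fin d → ℝ)) (hμ : μ = ν.map S)
    (b : (Fin d → ℝ) → Fin d → ℝ) (hbmeas : Measurable b)
    (T : ℝ) (hT : 0 < T)
    (ρ : ℝ → (Fin d → ℝ) → ℝ) (hρ : IsSolution ν b ρ T)
    (hbρ : ∃ M : ℝ, ∀ t ∈ Icc (0:ℝ) T, ∫ x, l2norm (b x) * ρ t x ∂ν ≤ M) :
    IsSolution μ (fun y => fderiv ℝ S (Sinv y) (b (Sinv y)))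
      (fun t y => ρ t (Sinv y)) T := by
  let Sh : (Fin d → ℝ) ≃ₜ (Fin d → ℝ) :=
    { toFun := S, invFun := Sinv, left_inv := hleft, right_inv := hright
      continuous_toFun := hS.continuous, continuous_invFun := hSinv.continuous }
  have hSe : MeasurableEmbedding S := Sh.measurableEmbedding
  subst hμ
  refine ⟨?_, fun t ht => ⟨?_, ?_⟩, fun ψ hψ t ht => ?_⟩
  · exact hρ.1.comp (measurable_fst.prodMk (hSinv.continuous.measurable.comp measurable_snd))
  · rw [hSe.ae_map_iff]
    simpa only [hleft _] using (hρ.2.1 t ht).1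
  · rw [hSe.integral_map]
    simpa only [hleft _] using (hρ.2.1 t ht).2
  · have hψ1 : ContDiff ℝ 1 ψ := hψ.1.of_le (by exact_mod_cast le_top)
    have hch : ∀ x v, fderiv ℝ ψ (S x) (fderiv ℝ S x v) = fderiv ℝ (ψ ∘ S) x v := by
      intro x v
      rw [fderiv_comp x (hψ1.differentiable one_ne_zero _) (hS.differentiable one_ne_zero _)]
      rfl
    obtain ⟨hA, hB⟩ := ext_C1 hbmeas hρ (ψ ∘ S) (hψ1.comp hS) (hψ.2.comp_homeomorph Sh) ht
    simp only [sum_pd]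
    constructor
    · have hm : (volume.restrict (Icc 0 t)).prod (ν.map S) =
          ((volume.restrict (Icc 0 t)).prod ν).map (Prod.map id S) := by
        rw [← Measure.map_prod_map _ _ measurable_id hSe.measurable, Measure.map_id]
      rw [hm, (MeasurableEmbedding.id.prodMap hSe).integrable_map_iff]
      convert hA using 1
      ext q
      simp [hleft _, hch]
    · simp only [hSe.integral_map, hleft _, hch]
      exact hB

end
end
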